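/- Let u, w ∈ [1,γ] \ {1} and let A, B ∈ Γ₊. If ⟨u⟩·A = ⟨w⟩·B in Γ₊, then there exist e, f ∈ [1,γ] and C ∈ Γ₊ such that A = ⟨e⟩·C and B = ⟨f⟩·C in Γ₊ (where ⟨1⟩ is interpreted as the identity of Γ₊), ue = wf, and ue is a least upper bound of {u,w} in ([1,γ],≤). -/

import Mathlib

/-! The proof has two parts: the interval `[1, γ]` has joins, and the word problem in the positive
monoid is controlled by these joins.

**Joins.** The Tits representation realizes `W` on `B → ℝ` by isometries of a scalar product obtained
by averaging. Carter's lemma (`GeomRep.rlen_eq_finrank`) identifies the reflection length of `w` with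
the dimension of its moved space `Mov w`, the image of `w - 1`; below a Coxeter element, which has no
nonzero fixed vector, the reflection order is inclusion of moved spaces (`GeomRep.rle_of_Mov_le`).
Let `c` be the product of a word `l` of distinct simple reflections. For a nonnegative vector `x`
with support in `l` there is `u₀ ≤ c` with `x ∈ Mov u₀` such that `Mov u₀ ≤ Mov u` for every `u ≤ c`
for which `x` lies in the cone of positive roots of `Mov u` (`GeomRep.hasCarrier`). This is proved without classification: with
`l = i :: l'`, either `s_i x` has a negative `i`-th coordinate, which forces the root of `s_i` into
every relevant `Mov u` and reduces the claim to `l'`, or `s_i x` is again nonnegative and `l` may be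
rotated. Rotation cannot go on forever, because the sum of the vectors `c⁻ᵐ x` would be a nonzero
nonnegative fixed vector of `c`. Applied to a generic `x` in the cone of positive roots of
`Mov u₁ ∩ Mov u₂`, this yields the meet of `u₁` and `u₂` (`exists_meet`). The anti-automorphism
`x ↦ x⁻¹ γ` of `[1, γ]` turns meets into joins (`exists_join`).

**Monoid.** The relations are homogeneous for reflection length, so one may induct on the weight of
`⟨u⟩A = ⟨w⟩D`, and within one weight on the derivation of the equality of words (`wordsComplete`).
Only transitivity needs an argument (`Completes.trans`): if `⟨u⟩A = ⟨x⟩D = ⟨w⟩E`, the two factorizations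
of the lighter element `D` given by the two halves are compared by the induction hypothesis. This
produces `z ≤ γ` above `u`, `x` and `w` with `A = ⟨u⁻¹z⟩C` and `E = ⟨w⁻¹z⟩C`. The join `p` of `u` and
`w` lies below `z`, hence `⟨u⁻¹z⟩ = ⟨u⁻¹p⟩⟨p⁻¹z⟩`, and the same holds for `w`. -/

variable {B : Type*} {W : Type*} [Group W] {M : CoxeterMatrix B}

/-- The reflection length of `w`: the least `k` such that `w` is a product of `k`
reflections (conjugates of simple reflections). -/
noncomputable def rlen (cs : CoxeterSystem M W) (w : W) : ℕ :=
  sInf {k | ∃ l : List W, (∀ t ∈ l, cs.IsReflection t) ∧ l.length = k ∧ l.prod = w}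

/-- The reflection (absolute) order on `W`: `u ≤ w` iff `ℓ(w) = ℓ(u) + ℓ(u⁻¹w)`. -/
def rle (cs : CoxeterSystem M W) (u w : W) : Prop :=
  rlen cs w = rlen cs u + rlen cs (u⁻¹ * w)

/-- A Coxeter element: a conjugate of a product of all the simple reflections,
each occurring exactly once, in some order. -/
def IsCoxeterElement [Fintype B] (cs : CoxeterSystem M W) (γ : W) : Prop :=
  ∃ (v : W) (l : List B), l.Nodup ∧ (∀ i : B, i ∈ l) ∧ γ = v * cs.wordProd l * v⁻¹

/-- `p` is a least upper bound of the set `s` within the interval `[1,γ]`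
under the reflection order. -/
def IsIntervalLUB (cs : CoxeterSystem M W) (γ : W) (s : Set W) (p : W) : Prop :=
  rle cs p γ ∧ (∀ x ∈ s, rle cs x p) ∧
    ∀ r, rle cs r γ → (∀ x ∈ s, rle cs x r) → rle cs p r

/-- The generating set of the poset group/monoid: the interval `[1,γ]` minus the identity. -/
abbrev NCGen (cs : CoxeterSystem M W) (γ : W) : Type _ :=
  {w : W // w ≠ 1 ∧ rle cs w γ}

/-- The defining relations of the positive monoid `Γ₊(W,γ)`:
`⟨w₁⟩⟨w₂⟩ = ⟨w₃⟩` whenever `w₁w₂ = w₃` in `W` and `ℓ(w₁) + ℓ(w₂) = ℓ(w₃)`. -/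
def posRels (cs : CoxeterSystem M W) (γ : W) :
    FreeMonoid (NCGen cs γ) → FreeMonoid (NCGen cs γ) → Prop :=
  fun x y => ∃ w₁ w₂ w₃ : NCGen cs γ,
    x = FreeMonoid.of w₁ * FreeMonoid.of w₂ ∧ y = FreeMonoid.of w₃ ∧
    (w₁ : W) * (w₂ : W) = (w₃ : W) ∧
    rlen cs (w₁ : W) + rlen cs (w₂ : W) = rlen cs (w₃ : W)

/-- The positive monoid `Γ₊(W,γ)`, presented by the generators `⟨w⟩`, `w ∈ [1,γ] \ {1}`,
and the relations `posRels`. -/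
abbrev PosMonoid (cs : CoxeterSystem M W) (γ : W) := PresentedMonoid (posRels cs γ)

open Classical in
/-- The generator `⟨w⟩` of `Γ₊(W,γ)` for `w ∈ [1,γ]`, interpreting `⟨1⟩` as the
identity of the monoid (and defaulting to the identity off the interval). -/
noncomputable def pgen (cs : CoxeterSystem M W) (γ : W) (w : W) : PosMonoid cs γ :=
  if h : w ≠ 1 ∧ rle cs w γ then PresentedMonoid.of (posRels cs γ) ⟨w, h⟩ else 1

/-! ### The geometric representation -/

/-- The `i`-th simple root, a coordinate vector of `B → ℝ`. -/
noncomputable def sroot (i : B) : B → ℝ := open Classical in Pi.single i 1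

/-- A realization of a finite Coxeter group as a group of isometries of `B → ℝ` for some scalar
product `ip`. The simple reflection `s i` acts as the orthogonal reflection in the coordinate
vector `sroot i`, and `pos` says that `w` maps `sroot i` to a nonnegative vector
whenever `s i` is not a right descent of `w`. The simple roots are not normalized. -/
structure GeomRep (cs : CoxeterSystem M W) where
  /-- the action of `W` -/
  ρ : W →* Module.End ℝ (B → ℝ)
  /-- the invariant scalar product -/
  ip : LinearMap.BilinForm ℝ (B → ℝ)
  ip_symm : ∀ x y, ip x y = ip y x
  ip_pos : ∀ x, x ≠ 0 → 0 < ip x x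
  ip_inv : ∀ w x y, ip (ρ w x) (ρ w y) = ip x y
  simple_apply : ∀ i x, ρ (cs.simple i) x =
    x - (2 * ip (sroot i) x / ip (sroot i) (sroot i)) • sroot i
  pos : ∀ w i, cs.length w < cs.length (w * cs.simple i) → ∀ j, 0 ≤ ρ w (sroot i) j

namespace GeomRep

theorem sroot_self (i : B) : sroot i i = 1 := by simp [sroot]

theorem sroot_ne {i j : B} (h : j ≠ i) : sroot i j = 0 := by simp [sroot, h]

theorem sroot_ne_zero (i : B) : sroot i ≠ 0 := by
  intro h
  have := congrFun h i
  simp [sroot_self] at this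

section Construction

variable [Fintype B]

/-- Twice the Tits form: the linear functional `x ↦ -2 ∑ j, cos (π / m_ij) x_j`. For `m_ij = 0`
(encoding `∞`) the convention `π / 0 = 0` yields the usual coefficient `-2`. -/
noncomputable def cofun (M : CoxeterMatrix B) (i : B) : Module.Dual ℝ (B → ℝ) :=
  ∑ j, (-2 * Real.cos (Real.pi / M i j)) • LinearMap.proj j

theorem cofun_sroot (i j : B) :
    cofun M i (sroot j) = -2 * Real.cos (Real.pi / M i j) := by
  classical
  simp [cofun, sroot, Pi.single_apply]

theorem cofun_self (i : B) : cofun M i (sroot i) = 2 := by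
  simp [cofun_sroot]

open Polynomial.Chebyshev in
/-- The braid relations hold in the Tits representation. -/
theorem braid (i j : B) :
    (Module.reflection (cofun_self (M := M) i) * Module.reflection (cofun_self (M := M) j)) ^ M i j
      = 1 := by
  by_cases hij : i = j
  · subst hij
    rw [M.diagonal, pow_one]
    ext1 x
    simp [LinearEquiv.mul_apply, Module.involutive_reflection (cofun_self (M := M) i) x]
  have hm1 : M i j ≠ 1 := M.off_diagonal i j hij
  have hsym : M j i = M i j := M.symmetric j i
  set m := M i j with hm
  rcases Nat.lt_or_ge m 3 with h3 | h3
  · have : m = 0 ∨ m = 2 := by omega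
    rcases this with h | h
    · rw [h, pow_zero]
    · have h1 : cofun M i (sroot j) = 0 := by rw [cofun_sroot, ← hm, h]; simp
      have h2 : cofun M j (sroot i) = 0 := by rw [cofun_sroot, hsym, h]; simp
      rw [h, pow_two]
      ext1 x
      simp only [LinearEquiv.mul_apply, Module.reflection_apply, map_sub, map_smul, h1, h2,
        cofun_self]
      simp only [LinearEquiv.coe_one, id]
      module
  · have hm0 : (m : ℝ) ≠ 0 := by positivity
    set φ : ℝ := 2 * Real.pi / m with hφ
    have hsin : Real.sin φ ≠ 0 := by
      refine (Real.sin_pos_of_pos_of_lt_pi (by positivity) ?_).ne'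
      rw [hφ, div_lt_iff₀ (by positivity)]
      have : (3 : ℝ) ≤ m := by exact_mod_cast h3
      nlinarith [Real.pi_pos]
    have ht : 2 * Real.cos φ = cofun M i (sroot j) * cofun M j (sroot i) - 2 := by
      rw [cofun_sroot, cofun_sroot, hsym, ← hm, hφ, mul_div_assoc, Real.cos_two_mul]
      ring
    have hS (n : ℤ) : (S ℝ n).eval (2 * Real.cos φ) = Real.sin ((n + 1) * φ) / Real.sin φ := by
      rw [eq_div_iff hsin, S_two_mul_real_cos]
    ext1 x
    rw [Module.reflection_mul_reflection_pow_apply _ _ m x _ ht]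
    rcases Nat.even_or_odd' m with ⟨k, hk | hk⟩
    · have e1 : ((m : ℤ) - 2) / 2 = k - 1 := by omega
      have e2 : ((m : ℤ) - 1) / 2 = k - 1 := by omega
      have e3 : (S ℝ ((k : ℤ) - 1)).eval (2 * Real.cos φ) = 0 := by
        have : ((((k : ℤ) - 1 : ℤ) : ℝ) + 1) * φ = Real.pi := by
          rw [hφ, hk]; push_cast
          have : (k : ℝ) ≠ 0 := by
            rintro h
            exact hm0 (by rw [hk]; push_cast; rw [h]; simp)
          field_simp
          ring
        rw [hS, this]; simp
      rw [e1, e2, e3]; simp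
    · have e1 : ((m : ℤ) - 2) / 2 = k - 1 := by omega
      have e2 : ((m : ℤ) - 1) / 2 = k := by omega
      have e3 : ((m : ℤ) - 3) / 2 = k - 1 := by omega
      have e4 : (m : ℤ) / 2 = k := by omega
      have e5 : (S ℝ (k : ℤ)).eval (2 * Real.cos φ) + (S ℝ ((k : ℤ) - 1)).eval (2 * Real.cos φ)
          = 0 := by
        have h1 : (((k : ℤ) : ℝ) + 1) * φ = 2 * Real.pi - k * φ := by
          have hmk : (m : ℝ) = 2 * k + 1 := by rw [hk]; push_cast; ring
          have : φ * m = 2 * Real.pi := by rw [hφ]; field_simp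
          rw [hmk] at this
          push_cast
          linarith
        have h2 : ((((k : ℤ) - 1 : ℤ) : ℝ) + 1) * φ = k * φ := by push_cast; ring
        rw [hS, hS, h1, h2, Real.sin_two_pi_sub]; ring
      rw [e1, e2, e3, e4, e5]; simp

theorem tits_liftable :
    M.IsLiftable fun i => (Module.reflection (cofun_self (M := M) i)).toLinearMap := by
  intro i j
  have := congrArg (LinearEquiv.automorphismGroup.toLinearMapMonoidHom
    (R := ℝ) (M := B → ℝ)) (braid (M := M) i j)
  rw [map_pow, map_mul, map_one] at this
  exact this

/-- The Tits representation on `B → ℝ`. -/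
noncomputable def tits (cs : CoxeterSystem M W) : W →* Module.End ℝ (B → ℝ) :=
  cs.lift ⟨_, tits_liftable⟩

theorem tits_simple (cs : CoxeterSystem M W) (i : B) (x : B → ℝ) :
    tits cs (cs.simple i) x = x - cofun M i x • sroot i := by
  have h := cs.lift_apply_simple (tits_liftable (M := M)) i
  have h2 := LinearMap.congr_fun h x
  refine h2.trans ?_
  simp [Module.reflection_apply]

/-- The action of a dihedral subgroup in the plane spanned by its two simple roots. -/
theorem tits_alternating (cs : CoxeterSystem M W) {s t : B} (θ : ℝ)
    (hs : cofun M s (sroot t) = -2 * Real.cos θ) (ht : cofun M t (sroot s) = -2 * Real.cos θ)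
    (k : ℕ) :
    Real.sin θ • tits cs (cs.wordProd (CoxeterSystem.alternatingWord s t k)) (sroot s) =
      if Even k then Real.sin ((k + 1 : ℕ) * θ) • sroot s + Real.sin (k * θ) • sroot t
      else Real.sin (k * θ) • sroot s + Real.sin ((k + 1 : ℕ) * θ) • sroot t := by
  have hsum (k : ℕ) : Real.sin ((k + 1 + 1 : ℕ) * θ) =
      2 * Real.cos θ * Real.sin ((k + 1 : ℕ) * θ) - Real.sin (k * θ) := by
    have h1 : ((k + 1 + 1 : ℕ) : ℝ) * θ = (k + 1 : ℕ) * θ + θ := by push_cast; ring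
    have h2 : (k : ℝ) * θ = (k + 1 : ℕ) * θ - θ := by push_cast; ring
    rw [h1, h2, Real.sin_add, Real.sin_sub]; ring
  induction k with
  | zero => simp [CoxeterSystem.alternatingWord]
  | succ k ih =>
    rw [CoxeterSystem.alternatingWord_succ', cs.wordProd_cons, map_mul, Module.End.mul_apply,
      ← map_smul, ih, hsum]
    by_cases hk : Even k
    · have : ¬ Even (k + 1) := by simpa [Nat.even_add_one] using hk
      simp only [hk, this, if_true, if_false, tits_simple, map_add, map_smul, ht, cofun_self]
      module
    · have : Even (k + 1) := by simpa [Nat.even_add_one] using hk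
      simp only [hk, this, if_true, if_false, tits_simple, map_add, map_smul, hs, cofun_self]
      module

/-- If `s` is not a right descent of `w`, then `w` maps the simple root of `s` to a positive
vector. The proof splits off from `w` a longest right factor in the dihedral group generated by `s`
and a right descent `t` of `w`. -/
theorem tits_pos (cs : CoxeterSystem M W) (hM : ∀ i j, M i j ≠ 0) (w : W) (s : B)
    (h : cs.length w < cs.length (w * cs.simple s)) : ∀ j, 0 ≤ tits cs w (sroot s) j := by
  induction hn : cs.length w using Nat.strong_induction_on generalizing w s with
  | _ n ih =>
  subst hn
  by_cases hw : w = 1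
  · subst hw
    intro j
    by_cases hj : j = s
    · subst hj; simp [sroot_self]
    · simp [sroot_ne hj]
  obtain ⟨t, ht⟩ := cs.exists_rightDescent_of_ne_one hw
  have hst : s ≠ t := by
    rintro rfl
    unfold CoxeterSystem.IsRightDescent at ht
    omega
  let a : ℕ → W := fun k => cs.wordProd (CoxeterSystem.alternatingWord s t k)
  let P : ℕ → Prop := fun k => cs.length (w * (a k)⁻¹) + k = cs.length w
  have ha1 : a 1 = cs.simple t := by simp [a, CoxeterSystem.alternatingWord]
  have hP1 : P 1 := by
    simp only [P, ha1, cs.inv_simple]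
    exact cs.isRightDescent_iff.1 ht
  classical
  have hbd : ∀ k, P k → k ≤ cs.length w := fun k hk => by simp only [P] at hk; omega
  set k := Nat.findGreatest P (cs.length w) with hk
  have hPk : P k := Nat.findGreatest_spec (hbd 1 hP1) hP1
  have hk1 : 1 ≤ k := Nat.le_findGreatest (hbd 1 hP1) hP1
  have hmax : ¬ P (k + 1) := fun hc =>
    absurd (Nat.le_findGreatest (hbd _ hc) hc) (by omega)
  have hsucc (k : ℕ) : a (k + 1) = cs.simple (if Even k then t else s) * a k := by
    simp only [a, CoxeterSystem.alternatingWord_succ', cs.wordProd_cons]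
  have hlen (k : ℕ) : cs.length (a k) ≤ k := by
    simpa using cs.length_wordProd_le (CoxeterSystem.alternatingWord s t k)
  set v := w * (a k)⁻¹ with hv
  have hvk : cs.length v + k = cs.length w := hPk
  have hwv : w = v * a k := by simp [hv]
  -- both generators of the dihedral group lengthen `v`
  have hasc : ∀ r, (r = s ∨ r = t) → cs.length v < cs.length (v * cs.simple r) := by
    have h1 : cs.length v < cs.length (v * cs.simple (if Even k then t else s)) := by
      rcases cs.length_mul_simple v (if Even k then t else s) with h | h
      · omega
      · exfalso
        apply hmax
        simp only [P, hsucc, mul_inv_rev, cs.inv_simple, ← mul_assoc]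
        rw [← hv]; omega
    have h2 : cs.length v < cs.length (v * cs.simple (if Even k then s else t)) := by
      obtain ⟨l, hl⟩ : ∃ l, k = l + 1 := ⟨k - 1, by omega⟩
      have e1 : (if Even k then s else t) = (if Even l then t else s) := by
        rw [hl]; by_cases h : Even l <;> simp [Nat.even_add_one, h]
      have e2 : v * cs.simple (if Even k then s else t) = w * (a l)⁻¹ := by
        rw [e1, hv, hl, hsucc]; simp [mul_assoc]
      rw [e2]
      have h3 := cs.length_mul_le (w * (a l)⁻¹) (a l)
      have h4 := hlen l
      simp only [inv_mul_cancel_right] at h3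
      omega
    rintro r (rfl | rfl) <;> by_cases he : Even k
    · simpa only [he, if_true] using h2
    · simpa only [he, if_false] using h1
    · simpa only [he, if_true] using h1
    · simpa only [he, if_false] using h2
  have hlt : cs.length v < cs.length w := by omega
  have hvs := ih _ hlt v s (hasc s (Or.inl rfl)) rfl
  have hvt := ih _ hlt v t (hasc t (Or.inr rfl)) rfl
  -- the dihedral factor is not the longest element
  have hkm : k < M s t := by
    by_contra hge
    obtain ⟨d, hd⟩ : ∃ d, k = d + M s t := ⟨k - M s t, by omega⟩
    have hm0 := hM s t
    have hpre (d : ℕ) : ∃ z : W, cs.length z ≤ d ∧ a (d + M s t) = z * a (M s t) := by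
      induction d with
      | zero => exact ⟨1, by simp, by simp⟩
      | succ d ihd =>
        obtain ⟨z, hz, e⟩ := ihd
        refine ⟨cs.simple (if Even (d + M s t) then t else s) * z, ?_, ?_⟩
        · have := cs.length_mul_le (cs.simple (if Even (d + M s t) then t else s)) z
          rw [cs.length_simple] at this
          omega
        · rw [show d + 1 + M s t = (d + M s t) + 1 by ring, hsucc, e, mul_assoc]
    obtain ⟨z, hz, e⟩ := hpre d
    have hb := cs.wordProd_braidWord_eq s t
    simp only [CoxeterSystem.braidWord, M.symmetric t s] at hb
    obtain ⟨q, hq⟩ : ∃ q, M s t = q + 1 := ⟨M s t - 1, by omega⟩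
    have hb2 : a (M s t) * cs.simple s =
        cs.wordProd (CoxeterSystem.alternatingWord s t q) := by
      simp only [a]
      rw [hb, hq, CoxeterSystem.alternatingWord_succ, cs.wordProd_concat]
      simp
    have hl2 : cs.length (a (M s t) * cs.simple s) ≤ q := by
      rw [hb2]; exact hlen q
    have : w * cs.simple s = v * z * (a (M s t) * cs.simple s) := by
      rw [hwv, hd, e]; simp [mul_assoc]
    have h5 := cs.length_mul_le (v * z) (a (M s t) * cs.simple s)
    have h6 := cs.length_mul_le v z
    rw [← this] at h5
    omega
  have hm2 : 2 ≤ M s t := by omega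
  set θ := Real.pi / M s t with hθ
  have hmpos : (0 : ℝ) < M s t := by exact_mod_cast (by omega : 0 < M s t)
  have hθ0 : 0 < θ := by positivity
  have hθm : M s t * θ = Real.pi := by rw [hθ]; field_simp
  have hsinle (l : ℕ) (hl : l ≤ M s t) : 0 ≤ Real.sin (l * θ) := by
    apply Real.sin_nonneg_of_nonneg_of_le_pi (by positivity)
    rw [← hθm]
    have : (l : ℝ) ≤ M s t := by exact_mod_cast hl
    gcongr
  have hsin : 0 < Real.sin θ := by
    apply Real.sin_pos_of_pos_of_lt_pi hθ0
    rw [← hθm]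
    have : (2 : ℝ) ≤ M s t := by exact_mod_cast hm2
    nlinarith
  have key := tits_alternating cs (M := M) θ (s := s) (t := t) (cofun_sroot s t)
    (by rw [cofun_sroot, M.symmetric t s]) k
  have key2 := congrArg (tits cs v) key
  rw [map_smul, ← Module.End.mul_apply, ← map_mul] at key2
  change Real.sin θ • tits cs (v * a k) (sroot s) = _ at key2
  rw [← hwv] at key2
  intro j
  have key3 := congrFun key2 j
  have n1 := hsinle k hkm.le
  have n2 := hsinle (k + 1) hkm
  have : 0 ≤ Real.sin θ * tits cs w (sroot s) j := by
    rw [Pi.smul_apply, smul_eq_mul] at key3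
    rw [key3]
    split_ifs <;>
      simp only [map_add, map_smul, Pi.add_apply, Pi.smul_apply, smul_eq_mul] <;>
      have a1 := hvs j <;> have a2 := hvt j <;> positivity
  exact nonneg_of_mul_nonneg_right this hsin

variable [Fintype W]

/-- The scalar product obtained by averaging the standard one over the finite group `W`. -/
noncomputable def avg (cs : CoxeterSystem M W) : LinearMap.BilinForm ℝ (B → ℝ) :=
  LinearMap.mk₂ ℝ (fun x y => ∑ w : W, (tits cs w x) ⬝ᵥ (tits cs w y))
    (fun x y z => by simp [Finset.sum_add_distrib])
    (fun c x y => by simp [Finset.mul_sum])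
    (fun x y z => by simp [Finset.sum_add_distrib])
    (fun c x y => by simp [Finset.mul_sum])

theorem avg_apply (cs : CoxeterSystem M W) (x y : B → ℝ) :
    avg cs x y = ∑ w : W, (tits cs w x) ⬝ᵥ (tits cs w y) := rfl

theorem avg_symm (cs : CoxeterSystem M W) (x y : B → ℝ) : avg cs x y = avg cs y x := by
  simp only [avg_apply]
  exact Finset.sum_congr rfl fun w _ => dotProduct_comm _ _

theorem avg_pos (cs : CoxeterSystem M W) (x : B → ℝ) (hx : x ≠ 0) : 0 < avg cs x x := by
  rw [avg_apply]
  have hnn : ∀ y : B → ℝ, 0 ≤ y ⬝ᵥ y := fun y =>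
    Finset.sum_nonneg fun i _ => mul_self_nonneg _
  refine Finset.sum_pos' (fun w _ => hnn _) ⟨1, Finset.mem_univ _, ?_⟩
  rw [map_one, Module.End.one_apply]
  exact lt_of_le_of_ne (hnn x) fun h => hx (dotProduct_self_eq_zero.1 h.symm)

theorem avg_inv (cs : CoxeterSystem M W) (v : W) (x y : B → ℝ) :
    avg cs (tits cs v x) (tits cs v y) = avg cs x y := by
  simp only [avg_apply, ← Module.End.mul_apply, ← map_mul]
  exact Fintype.sum_equiv (Equiv.mulRight v) _ _ fun w => rfl

/-- A simple reflection is orthogonal for the averaged form, which determines its functional. -/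
theorem cofun_eq (cs : CoxeterSystem M W) (i : B) (x : B → ℝ) :
    cofun M i x = 2 * avg cs (sroot i) x / avg cs (sroot i) (sroot i) := by
  have h := avg_inv cs (cs.simple i) (sroot i) x
  have hp := avg_pos cs (sroot i) (sroot_ne_zero i)
  rw [tits_simple, tits_simple, cofun_self] at h
  simp only [map_sub, map_smul, LinearMap.sub_apply, LinearMap.smul_apply, smul_eq_mul] at h
  rw [eq_div_iff hp.ne']
  linarith

theorem M_ne_zero (cs : CoxeterSystem M W) (i j : B) : M i j ≠ 0 := by
  intro h
  have hij : i ≠ j := by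
    rintro rfl
    simp at h
  have h1 := cofun_eq cs i (sroot j)
  have h2 := cofun_eq cs j (sroot i)
  rw [cofun_sroot, h] at h1
  rw [cofun_sroot, M.symmetric j i, h] at h2
  have p1 := avg_pos cs (sroot i) (sroot_ne_zero i)
  have p2 := avg_pos cs (sroot j) (sroot_ne_zero j)
  rw [eq_div_iff p1.ne'] at h1
  rw [eq_div_iff p2.ne', avg_symm cs (sroot j) (sroot i)] at h2
  simp only [Nat.cast_zero, div_zero, Real.cos_zero] at h1 h2
  have hne : sroot i + sroot j ≠ 0 := by
    intro h0
    have := congrFun h0 i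
    simp [sroot_self, sroot_ne hij] at this
  have := avg_pos cs _ hne
  simp only [map_add, LinearMap.add_apply] at this
  rw [avg_symm cs (sroot j) (sroot i)] at this
  linarith

/-- The realization of a finite Coxeter group by the Tits representation. -/
noncomputable def ofFinite (cs : CoxeterSystem M W) : GeomRep cs where
  ρ := tits cs
  ip := avg cs
  ip_symm := avg_symm cs
  ip_pos := avg_pos cs
  ip_inv := avg_inv cs
  simple_apply i x := by rw [tits_simple, cofun_eq cs]
  pos := tits_pos cs (M_ne_zero cs)

end Construction

end GeomRep

/-! ### Reflection length and reflection order -/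

section ReflectionLength

variable {cs : CoxeterSystem M W}

theorem rlen_prod_le {l : List W} (h : ∀ t ∈ l, cs.IsReflection t) :
    rlen cs l.prod ≤ l.length :=
  Nat.sInf_le ⟨l, h, rfl, rfl⟩

theorem rlen_spec (cs : CoxeterSystem M W) (w : W) :
    ∃ l : List W, (∀ t ∈ l, cs.IsReflection t) ∧ l.length = rlen cs w ∧ l.prod = w := by
  have hne : {k | ∃ l : List W, (∀ t ∈ l, cs.IsReflection t) ∧ l.length = k ∧
      l.prod = w}.Nonempty := by
    obtain ⟨l, rfl⟩ := cs.wordProd_surjective w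
    refine ⟨_, l.map cs.simple, ?_, rfl, rfl⟩
    intro t ht
    obtain ⟨i, -, rfl⟩ := List.mem_map.1 ht
    exact cs.isReflection_simple i
  exact Nat.sInf_mem hne

theorem rlen_one : rlen cs 1 = 0 :=
  Nat.le_zero.1 (rlen_prod_le (cs := cs) (l := []) (by simp))

theorem eq_one_of_rlen {w : W} (h : rlen cs w = 0) : w = 1 := by
  obtain ⟨l, -, h1, h2⟩ := rlen_spec cs w
  rw [h, List.length_eq_zero_iff] at h1
  rw [← h2, h1, List.prod_nil]

theorem rlen_mul_le (a b : W) : rlen cs (a * b) ≤ rlen cs a + rlen cs b := by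
  obtain ⟨l, h, h1, h2⟩ := rlen_spec cs a
  obtain ⟨l', h', h1', h2'⟩ := rlen_spec cs b
  rw [← h1, ← h1', ← List.length_append, ← h2, ← h2', ← List.prod_append]
  refine rlen_prod_le fun t ht => ?_
  rcases List.mem_append.1 ht with ht | ht
  exacts [h t ht, h' t ht]

theorem rlen_reflection_le {t : W} (ht : cs.IsReflection t) : rlen cs t ≤ 1 := by
  simpa using rlen_prod_le (cs := cs) (l := [t]) (by simpa using ht)

theorem rlen_conj_le (v w : W) : rlen cs (v * w * v⁻¹) ≤ rlen cs w := by
  obtain ⟨l, h, h1, h2⟩ := rlen_spec cs w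
  have key : (l.map (MulAut.conj v)).prod = v * w * v⁻¹ := by
    rw [← map_list_prod, h2, MulAut.conj_apply]
  rw [← key, ← h1, ← List.length_map (f := MulAut.conj v)]
  refine rlen_prod_le fun t ht => ?_
  obtain ⟨r, hr, rfl⟩ := List.mem_map.1 ht
  exact (h r hr).conj v

theorem rlen_conj (v w : W) : rlen cs (v * w * v⁻¹) = rlen cs w := by
  refine le_antisymm (rlen_conj_le v w) ?_
  have := rlen_conj_le (cs := cs) v⁻¹ (v * w * v⁻¹)
  rwa [show v⁻¹ * (v * w * v⁻¹) * v⁻¹⁻¹ = w by group] at this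

theorem rlen_mul_comm (a b : W) : rlen cs (a * b) = rlen cs (b * a) := by
  rw [← rlen_conj b (a * b)]
  congr 1
  group

theorem rle_of_le {u w : W} (h : rlen cs u + rlen cs (u⁻¹ * w) ≤ rlen cs w) : rle cs u w := by
  refine le_antisymm ?_ h
  simpa using rlen_mul_le (cs := cs) u (u⁻¹ * w)

theorem rle_refl (u : W) : rle cs u u := by simp [rle, rlen_one]

theorem one_rle (u : W) : rle cs 1 u := by simp [rle, rlen_one]

theorem rle_trans {u v w : W} (h1 : rle cs u v) (h2 : rle cs v w) : rle cs u w := by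
  apply rle_of_le
  have := rlen_mul_le (cs := cs) (u⁻¹ * v) (v⁻¹ * w)
  rw [show u⁻¹ * v * (v⁻¹ * w) = u⁻¹ * w by group] at this
  unfold rle at h1 h2
  omega

theorem rle_antisymm {u v : W} (h1 : rle cs u v) (h2 : rle cs v u) : u = v := by
  unfold rle at h1 h2
  have : u⁻¹ * v = 1 := eq_one_of_rlen (cs := cs) (by omega)
  exact inv_mul_eq_one.1 this

theorem rle_conj {u w : W} (v : W) (h : rle cs u w) :
    rle cs (v * u * v⁻¹) (v * w * v⁻¹) := by
  unfold rle
  rw [show (v * u * v⁻¹)⁻¹ * (v * w * v⁻¹) = v * (u⁻¹ * w) * v⁻¹ by group, rlen_conj, rlen_conj,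
    rlen_conj]
  exact h

theorem rle_conj_iff {u w : W} (v : W) :
    rle cs (v * u * v⁻¹) (v * w * v⁻¹) ↔ rle cs u w := by
  refine ⟨fun h => ?_, rle_conj v⟩
  have := rle_conj v⁻¹ h
  simpa [mul_assoc] using this

/-- The Kreweras complement `u ↦ u⁻¹ * γ` reverses the order of `[1, γ]`. -/
theorem rle_compl {u w γ : W} (h : rle cs u w) (hw : rle cs w γ) :
    rle cs (w⁻¹ * γ) (u⁻¹ * γ) := by
  have hu := rle_trans h hw
  have e : rlen cs ((w⁻¹ * γ)⁻¹ * (u⁻¹ * γ)) = rlen cs (u⁻¹ * w) := by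
    rw [show (w⁻¹ * γ)⁻¹ * (u⁻¹ * γ) = γ⁻¹ * (w * u⁻¹) * γ⁻¹⁻¹ by group, rlen_conj,
      rlen_mul_comm]
  unfold rle at *
  omega

theorem rle_inv_mul {x γ : W} (hx : rle cs x γ) : rle cs (x⁻¹ * γ) γ := by
  simpa using rle_compl (one_rle x) hx

theorem rle_mul_inv {x γ : W} (hx : rle cs x γ) : rle cs (γ * x⁻¹) γ := by
  have h := rle_conj γ (rle_inv_mul hx)
  rw [show γ * (x⁻¹ * γ) * γ⁻¹ = γ * x⁻¹ by group,
    show γ * γ * γ⁻¹ = γ by group] at h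
  exact h

theorem rle_left_cancel {x f g : W} (h1 : rle cs x (x * f)) (h2 : rle cs (x * f) (x * g)) :
    rle cs f g := by
  have h3 := rle_trans h1 h2
  unfold rle at *
  rw [show (x * f)⁻¹ * (x * g) = f⁻¹ * g by group] at h2
  simp only [inv_mul_cancel_left] at h1 h3
  omega

theorem rle_mul_left {x f g : W} (h1 : rle cs x (x * g)) (h2 : rle cs f g) :
    rle cs x (x * f) ∧ rle cs (x * f) (x * g) := by
  have a := rlen_mul_le (cs := cs) x f
  have b := rlen_mul_le (cs := cs) (x * f) (f⁻¹ * g)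
  rw [show x * f * (f⁻¹ * g) = x * g by group] at b
  unfold rle at *
  rw [show (x * f)⁻¹ * (x * g) = f⁻¹ * g by group]
  simp only [inv_mul_cancel_left] at *
  omega

end ReflectionLength

namespace GeomRep

set_option linter.unusedSectionVars false

/-! ### Roots, fixed spaces and moved spaces -/

variable {cs : CoxeterSystem M W} (G : GeomRep cs)

/-- The fixed space of `w`. -/
noncomputable def Fx (w : W) : Submodule ℝ (B → ℝ) := LinearMap.ker (G.ρ w - 1)

/-- The moved space of `w`, the image of `w - 1`. -/
noncomputable def Mov (w : W) : Submodule ℝ (B → ℝ) := LinearMap.range (G.ρ w - 1)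

/-- Roots: the images of the simple roots under `W` (not normalized). -/
def IsRoot (β : B → ℝ) : Prop := ∃ w i, G.ρ w (sroot i) = β

/-- The positive roots lying in a subspace. -/
def PosIn (U : Submodule ℝ (B → ℝ)) : Set (B → ℝ) :=
  {β | G.IsRoot β ∧ (∀ j, 0 ≤ β j) ∧ β ∈ U}

variable {G}

theorem mem_Fx {w : W} {x : B → ℝ} : x ∈ G.Fx w ↔ G.ρ w x = x := by
  simp [Fx, sub_eq_zero]

theorem mem_Mov {w : W} {y : B → ℝ} : y ∈ G.Mov w ↔ ∃ x, G.ρ w x - x = y := by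
  simp [Mov]

theorem act_mul (a b : W) (x : B → ℝ) : G.ρ (a * b) x = G.ρ a (G.ρ b x) := by
  rw [map_mul, Module.End.mul_apply]

theorem act_inv_act (a : W) (x : B → ℝ) : G.ρ a⁻¹ (G.ρ a x) = x := by
  rw [← act_mul]; simp

theorem act_act_inv (a : W) (x : B → ℝ) : G.ρ a (G.ρ a⁻¹ x) = x := by
  rw [← act_mul]; simp

theorem act_one (x : B → ℝ) : G.ρ 1 x = x := by simp

theorem mem_Mov_conj {g u : W} {y : B → ℝ} :
    y ∈ G.Mov (g * u * g⁻¹) ↔ G.ρ g⁻¹ y ∈ G.Mov u := by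
  simp only [mem_Mov]
  constructor
  · rintro ⟨x, rfl⟩
    refine ⟨G.ρ g⁻¹ x, ?_⟩
    rw [map_sub, act_mul, act_mul, act_inv_act]
  · rintro ⟨x, hx⟩
    refine ⟨G.ρ g x, ?_⟩
    rw [act_mul, act_mul, act_inv_act, ← map_sub, hx, act_act_inv]

theorem Mov_one : G.Mov (1 : W) = ⊥ := by
  simp [Mov]

theorem Mov_mul_le (a b : W) : G.Mov (a * b) ≤ G.Mov a ⊔ G.Mov b := by
  intro y hy
  obtain ⟨x, rfl⟩ := mem_Mov.1 hy
  rw [act_mul, ← sub_add_sub_cancel _ (G.ρ b x) x]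
  exact Submodule.add_mem_sup (mem_Mov.2 ⟨_, rfl⟩) (mem_Mov.2 ⟨_, rfl⟩)

theorem ip_self_eq_zero {x : B → ℝ} (h : G.ip x x = 0) : x = 0 := by
  by_contra hx
  exact (G.ip_pos x hx).ne' h

theorem ip_self_nonneg (x : B → ℝ) : 0 ≤ G.ip x x := by
  by_cases hx : x = 0
  · simp [hx]
  · exact (G.ip_pos x hx).le

theorem ip_act_left (w : W) (x y : B → ℝ) : G.ip (G.ρ w x) y = G.ip x (G.ρ w⁻¹ y) := by
  rw [← G.ip_inv w x, act_act_inv]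

theorem ip_Fx_Mov {w : W} {x y : B → ℝ} (hx : x ∈ G.Fx w) (hy : y ∈ G.Mov w) :
    G.ip x y = 0 := by
  obtain ⟨v, rfl⟩ := mem_Mov.1 hy
  rw [map_sub]
  nth_rewrite 1 [← mem_Fx.1 hx]
  rw [G.ip_inv, sub_self]

theorem mem_Fx_of_ip {w : W} {x : B → ℝ} (h : ∀ y ∈ G.Mov w, G.ip x y = 0) : x ∈ G.Fx w := by
  rw [mem_Fx, ← sub_eq_zero]
  apply ip_self_eq_zero (G := G)
  have h1 := h _ (mem_Mov.2 ⟨x, rfl⟩)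
  have h2 := G.ip_inv w x x
  simp only [map_sub, LinearMap.sub_apply] at h1 ⊢
  rw [h2, G.ip_symm (G.ρ w x) x]
  linarith

section Roots

variable {β : B → ℝ}

theorem isRoot_sroot (i : B) : G.IsRoot (sroot i) := ⟨1, i, by simp⟩

theorem IsRoot.act (h : G.IsRoot β) (w : W) : G.IsRoot (G.ρ w β) := by
  obtain ⟨v, i, rfl⟩ := h
  exact ⟨w * v, i, act_mul _ _ _⟩

theorem simple_sroot (i : B) : G.ρ (cs.simple i) (sroot i) = - sroot i := by
  have := G.ip_pos _ (sroot_ne_zero i)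
  rw [G.simple_apply, mul_div_assoc, div_self this.ne']
  module

theorem IsRoot.neg (h : G.IsRoot β) : G.IsRoot (-β) := by
  obtain ⟨v, i, rfl⟩ := h
  exact ⟨v * cs.simple i, i, by rw [act_mul, simple_sroot, map_neg]⟩

theorem IsRoot.ne_zero (h : G.IsRoot β) : β ≠ 0 := by
  obtain ⟨v, i, rfl⟩ := h
  intro h0
  apply sroot_ne_zero i
  rw [← act_inv_act (G := G) v (sroot i), h0, map_zero]

theorem IsRoot.pos_or_neg (h : G.IsRoot β) : (∀ j, 0 ≤ β j) ∨ ∀ j, 0 ≤ (-β) j := by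
  obtain ⟨v, i, rfl⟩ := h
  rcases cs.length_mul_simple v i with h | h
  · exact Or.inl (G.pos v i (by omega))
  · right
    have := G.pos (v * cs.simple i) i (by rw [mul_assoc, cs.simple_mul_simple_self, mul_one]; omega)
    rwa [act_mul, simple_sroot, map_neg] at this

theorem IsRoot.exists_reflection (h : G.IsRoot β) : ∃ t, cs.IsReflection t ∧
    ∀ x, G.ρ t x = x - (2 * G.ip β x / G.ip β β) • β := by
  obtain ⟨v, i, rfl⟩ := h
  refine ⟨v * cs.simple i * v⁻¹, ⟨v, i, rfl⟩, fun x => ?_⟩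
  rw [act_mul, act_mul, G.simple_apply, map_sub, map_smul, act_act_inv, G.ip_inv,
    ip_act_left]

theorem exists_root_of_reflection {t : W} (h : cs.IsReflection t) : ∃ β, G.IsRoot β ∧
    ∀ x, G.ρ t x = x - (2 * G.ip β x / G.ip β β) • β := by
  obtain ⟨v, i, rfl⟩ := h
  refine ⟨_, ⟨v, i, rfl⟩, fun x => ?_⟩
  rw [act_mul, act_mul, G.simple_apply, map_sub, map_smul, act_act_inv, G.ip_inv,
    ip_act_left]

theorem eq_one_of_pos {w : W} (h : ∀ i j, 0 ≤ G.ρ w (sroot i) j) : w = 1 := by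
  by_contra hw
  obtain ⟨i, hi⟩ := cs.exists_rightDescent_of_ne_one hw
  have h1 := G.pos (w * cs.simple i) i (by
    rw [mul_assoc, cs.simple_mul_simple_self, mul_one]; exact hi)
  rw [act_mul, simple_sroot, map_neg] at h1
  have h0 : G.IsRoot (G.ρ w (sroot i)) := (isRoot_sroot i).act w
  apply h0.ne_zero
  funext j
  have a := h1 j
  have b := h i j
  simp only [Pi.neg_apply] at a
  simp only [Pi.zero_apply]
  linarith

theorem finite_roots [Finite B] [Finite W] : {β | G.IsRoot β}.Finite := by
  have : {β | G.IsRoot β} = Set.range (fun p : W × B => G.ρ p.1 (sroot p.2)) := by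
    ext β
    simp [IsRoot]
  rw [this]
  exact Set.finite_range _

theorem Fx_lt_of_root {w t : W} {β : B → ℝ} (hβ : G.IsRoot β) (hm : β ∈ G.Mov w)
    (ht : ∀ x, G.ρ t x = x - (2 * G.ip β x / G.ip β β) • β) : G.Fx w < G.Fx (t * w) := by
  obtain ⟨v, hv⟩ := mem_Mov.1 hm
  refine lt_of_le_of_ne ?_ ?_
  · intro x hx
    rw [mem_Fx, act_mul, mem_Fx.1 hx, ht, G.ip_symm, ip_Fx_Mov hx hm]
    simp
  · intro he
    have h1 : v ∈ G.Fx (t * w) := by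
      have hwv : G.ρ w v = v + β := by rw [← hv]; abel
      have h2 := G.ip_inv w v v
      rw [hwv] at h2
      simp only [map_add, LinearMap.add_apply] at h2
      rw [G.ip_symm v β] at h2
      have hp := G.ip_pos β hβ.ne_zero
      have h3 : 2 * G.ip β (v + β) / G.ip β β = 1 := by
        rw [div_eq_one_iff_eq hp.ne', map_add]
        linarith
      rw [mem_Fx, act_mul, hwv, ht, h3]
      simp
    rw [← he, mem_Fx] at h1
    rw [h1, sub_self] at hv
    exact hβ.ne_zero hv.symm

theorem Mov_reflection {t : W} {β : B → ℝ} (hβ : G.IsRoot β)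
    (hta : ∀ x, G.ρ t x = x - (2 * G.ip β x / G.ip β β) • β) :
    G.Mov t = Submodule.span ℝ {β} := by
  apply le_antisymm
  · intro y hy
    obtain ⟨x, rfl⟩ := mem_Mov.1 hy
    rw [hta, sub_sub_cancel_left]
    exact Submodule.neg_mem _ (Submodule.smul_mem _ _ (Submodule.mem_span_singleton_self _))
  · rw [Submodule.span_singleton_le_iff_mem, mem_Mov]
    have hp := G.ip_pos β hβ.ne_zero
    refine ⟨(-1 / 2 : ℝ) • β, ?_⟩
    have h3 : 2 * G.ip β ((-1 / 2 : ℝ) • β) / G.ip β β = -1 := by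
      rw [map_smul, smul_eq_mul, div_eq_iff hp.ne']; ring
    rw [hta, h3]
    module

end Roots

section Finite

variable [Fintype B]

theorem finrank_Mov_add (w : W) :
    Module.finrank ℝ (G.Mov w) + Module.finrank ℝ (G.Fx w) = Fintype.card B := by
  have := LinearMap.finrank_range_add_finrank_ker (G.ρ w - 1)
  rwa [Module.finrank_fintype_fun_eq_card] at this

theorem mem_Mov_of_ip {w : W} {y : B → ℝ} (h : ∀ x ∈ G.Fx w, G.ip x y = 0) : y ∈ G.Mov w := by
  have hd : Disjoint (G.Mov w) (G.Fx w) := by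
    rw [Submodule.disjoint_def]
    intro x h1 h2
    exact ip_self_eq_zero (G := G) (ip_Fx_Mov h2 h1)
  have ht : G.Mov w ⊔ G.Fx w = ⊤ := by
    apply Submodule.eq_top_of_disjoint _ _ _ hd
    rw [finrank_Mov_add, Module.finrank_fintype_fun_eq_card]
  obtain ⟨m, hm, f, hf, rfl⟩ := Submodule.mem_sup.1 (ht ▸ Submodule.mem_top : y ∈ G.Mov w ⊔ G.Fx w)
  have h1 := h f hf
  rw [map_add, ip_Fx_Mov hf hm, zero_add] at h1
  rw [ip_self_eq_zero h1, add_zero]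
  exact hm

theorem eq_sum_sroot (x : B → ℝ) : x = ∑ j, x j • sroot j := by
  classical
  funext i
  rw [Finset.sum_apply, Finset.sum_eq_single i]
  · simp [sroot_self]
  · intro j _ hj
    simp [sroot_ne hj.symm]
  · simp

theorem ip_eq_sum (x y : B → ℝ) : G.ip x y = ∑ j, x j * G.ip (sroot j) y := by
  conv_lhs => rw [eq_sum_sroot x]
  simp [LinearMap.sum_apply]

/-- A nontrivial element moves some vector along a root. Otherwise it would fix a vector on no
reflecting hyperplane, hence a conjugate of it would fix an interior point of the dominant chamber
and so preserve positivity of roots. -/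
theorem exists_root_mem_Mov [Fintype W] {w : W} (hw : w ≠ 1) : ∃ β, G.IsRoot β ∧ β ∈ G.Mov w := by
  by_contra hno
  push Not at hno
  have h1 : ∀ p : W × B, ∃ x ∈ G.Fx w, G.ip (G.ρ p.1 (sroot p.2)) x ≠ 0 := by
    intro p
    by_contra hc
    push Not at hc
    exact hno _ ⟨p.1, p.2, rfl⟩ (mem_Mov_of_ip fun x hx => by rw [G.ip_symm]; exact hc x hx)
  obtain ⟨v, hv, hne⟩ := Module.Dual.exists_forall_mem_ne_zero_of_forall_exists (G.Fx w)
    (fun p : W × B => G.ip (G.ρ p.1 (sroot p.2))) h1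
  obtain ⟨g, -, hg⟩ := Finset.exists_max_image (Finset.univ : Finset W)
    (fun g => ∑ j, G.ρ g v j) ⟨1, Finset.mem_univ _⟩
  have hdom : ∀ i, 0 < G.ip (sroot i) (G.ρ g v) := by
    intro i
    have h2 : G.ip (sroot i) (G.ρ g v) ≠ 0 := by
      have := hne (g⁻¹, i)
      rwa [ip_act_left, inv_inv] at this
    refine lt_of_le_of_ne ?_ h2.symm
    have h3 := hg (cs.simple i * g) (Finset.mem_univ _)
    rw [act_mul, G.simple_apply] at h3
    simp only [Pi.sub_apply, Pi.smul_apply, smul_eq_mul, Finset.sum_sub_distrib,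
      ← Finset.mul_sum] at h3
    have h4 : ∑ j, sroot i j = 1 := by
      rw [Finset.sum_eq_single i (fun j _ hj => sroot_ne hj) (by simp), sroot_self]
    rw [h4, mul_one] at h3
    have h5 := G.ip_pos _ (sroot_ne_zero i)
    have h6 : 0 ≤ 2 * G.ip (sroot i) (G.ρ g v) / G.ip (sroot i) (sroot i) := by linarith
    by_contra hc
    have : 2 * G.ip (sroot i) (G.ρ g v) / G.ip (sroot i) (sroot i) < 0 :=
      div_neg_of_neg_of_pos (by linarith) h5
    linarith
  have hone : g * w * g⁻¹ = 1 := by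
    apply eq_one_of_pos (G := G)
    intro i
    have hr : G.IsRoot (G.ρ (g * w * g⁻¹) (sroot i)) := (isRoot_sroot i).act _
    rcases hr.pos_or_neg with h | h
    · exact h
    · exfalso
      have hfix : G.ρ (g * w * g⁻¹) (G.ρ g v) = G.ρ g v := by
        rw [act_mul, act_mul, act_inv_act, mem_Fx.1 hv]
      have h7 := hdom i
      rw [← G.ip_inv (g * w * g⁻¹), hfix] at h7
      have h8 : 0 ≤ G.ip (-G.ρ (g * w * g⁻¹) (sroot i)) (G.ρ g v) := by
        rw [ip_eq_sum]
        exact Finset.sum_nonneg fun j _ => mul_nonneg (h j) (hdom j).le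
      rw [map_neg, LinearMap.neg_apply] at h8
      linarith
  apply hw
  have : w = g⁻¹ * (g * w * g⁻¹) * g := by group
  rw [this, hone]; group

/-! ### Reflection length as a dimension -/

theorem finrank_Mov_le_rlen (w : W) : Module.finrank ℝ (G.Mov w) ≤ rlen cs w := by
  obtain ⟨l, hl, h1, rfl⟩ := rlen_spec cs w
  rw [← h1]
  clear h1
  induction l with
  | nil => rw [List.prod_nil, Mov_one]; simp
  | cons t l ih =>
    have h2 := ih fun r hr => hl r (List.mem_cons_of_mem _ hr)
    obtain ⟨β, hr, hβ⟩ := exists_root_of_reflection (G := G) (hl t List.mem_cons_self)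
    have h4 : Module.finrank ℝ (G.Mov t) = 1 := by
      rw [Mov_reflection hr hβ, finrank_span_singleton hr.ne_zero]
    have h5 := Submodule.finrank_mono (Mov_mul_le (G := G) t l.prod)
    have h6 := Submodule.finrank_add_le_finrank_add_finrank (G.Mov t) (G.Mov l.prod)
    rw [List.prod_cons, List.length_cons]
    omega

variable [Fintype W]

/-- Carter's lemma: reflection length is the dimension of the moved space. -/
theorem rlen_eq_finrank (w : W) : rlen cs w = Module.finrank ℝ (G.Mov w) := by
  refine le_antisymm ?_ (finrank_Mov_le_rlen w)
  induction hn : Module.finrank ℝ (G.Mov w) using Nat.strong_induction_on generalizing w with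
  | _ n ih =>
  subst hn
  by_cases hw : w = 1
  · simp [hw, rlen_one]
  obtain ⟨β, hβ, hm⟩ := exists_root_mem_Mov (G := G) hw
  obtain ⟨t, ht, hta⟩ := hβ.exists_reflection
  have h1 := Submodule.finrank_lt_finrank_of_lt (Fx_lt_of_root hβ hm hta)
  have h2 := finrank_Mov_add (G := G) w
  have h3 := finrank_Mov_add (G := G) (t * w)
  have h4 := ih _ (by omega) (t * w) rfl
  have h5 := rlen_mul_le (cs := cs) t (t * w)
  rw [← mul_assoc, ht.mul_self, one_mul] at h5
  have h6 := rlen_reflection_le ht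
  omega

theorem rlen_add_finrank_Fx (w : W) :
    rlen cs w + Module.finrank ℝ (G.Fx w) = Fintype.card B := by
  rw [rlen_eq_finrank (G := G), finrank_Mov_add]

theorem rlen_root_mul {w t : W} {β : B → ℝ} (hβ : G.IsRoot β) (hm : β ∈ G.Mov w)
    (ht : cs.IsReflection t) (hta : ∀ x, G.ρ t x = x - (2 * G.ip β x / G.ip β β) • β) :
    rlen cs t = 1 ∧ rlen cs (t * w) + 1 = rlen cs w := by
  have h1 := Submodule.finrank_lt_finrank_of_lt (Fx_lt_of_root hβ hm hta)
  have h2 := rlen_add_finrank_Fx (G := G) w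
  have h3 := rlen_add_finrank_Fx (G := G) (t * w)
  have h5 := rlen_mul_le (cs := cs) t (t * w)
  rw [← mul_assoc, ht.mul_self, one_mul] at h5
  have h6 := rlen_reflection_le ht
  omega

theorem rle_root {w t : W} {β : B → ℝ} (hβ : G.IsRoot β) (hm : β ∈ G.Mov w)
    (ht : cs.IsReflection t) (hta : ∀ x, G.ρ t x = x - (2 * G.ip β x / G.ip β β) • β) :
    rle cs t w := by
  have := rlen_root_mul hβ hm ht hta
  unfold rle
  rw [ht.inv]
  omega

theorem Mov_eq_sup {u w : W} (h : rle cs u w) : G.Mov w = G.Mov u ⊔ G.Mov (u⁻¹ * w) := by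
  have h1 := Mov_mul_le (G := G) u (u⁻¹ * w)
  rw [mul_inv_cancel_left] at h1
  refine Submodule.eq_of_le_of_finrank_le h1 ?_
  have h2 := Submodule.finrank_add_le_finrank_add_finrank (G.Mov u) (G.Mov (u⁻¹ * w))
  unfold rle at h
  rw [rlen_eq_finrank (G := G), rlen_eq_finrank (G := G), rlen_eq_finrank (G := G)] at h
  omega

theorem Mov_mono {u w : W} (h : rle cs u w) : G.Mov u ≤ G.Mov w := by
  rw [Mov_eq_sup h]; exact le_sup_left

theorem Mov_le_span (w : W) : G.Mov w ≤ Submodule.span ℝ (G.PosIn (G.Mov w)) := by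
  induction hn : rlen cs w using Nat.strong_induction_on generalizing w with
  | _ n ih =>
  subst hn
  by_cases hw : w = 1
  · rw [hw, Mov_one]; exact bot_le
  obtain ⟨β, hβ, hm⟩ := exists_root_mem_Mov (G := G) hw
  obtain ⟨t, ht, hta⟩ := hβ.exists_reflection
  have h1 := rlen_root_mul hβ hm ht hta
  have h2 := Mov_eq_sup (G := G) (rle_root hβ hm ht hta)
  have h3 := ih _ (by omega) (t * w) rfl
  rw [ht.inv] at h2
  have hle : G.Mov (t * w) ≤ G.Mov w := by rw [h2]; exact le_sup_right
  have h4 : G.Mov t ≤ Submodule.span ℝ (G.PosIn (G.Mov w)) := by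
    rw [Mov_reflection hβ hta, Submodule.span_singleton_le_iff_mem]
    rcases hβ.pos_or_neg with h | h
    · exact Submodule.subset_span ⟨hβ, h, hm⟩
    · rw [← neg_neg β]
      exact Submodule.neg_mem _ (Submodule.subset_span ⟨hβ.neg, h, Submodule.neg_mem _ hm⟩)
  have h5 := sup_le h4 (h3.trans (Submodule.span_mono fun x hx => ⟨hx.1, hx.2.1, hle hx.2.2⟩))
  rwa [← h2] at h5

/-- Below an element with full moved space, the reflection order is inclusion of moved spaces. -/
theorem rle_of_Mov_le {c u w : W} (hc : G.Fx c = ⊥) (hu : rle cs u c) (hw : rle cs w c)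
    (h : G.Mov u ≤ G.Mov w) : rle cs u w := by
  have hZ {a : W} {z : B → ℝ} : z ∈ G.Fx (a⁻¹ * c) ↔ G.ρ c z = G.ρ a z := by
    rw [mem_Fx, act_mul]
    constructor
    · intro h
      rw [← h, act_act_inv, h]
    · intro h
      rw [h, act_inv_act]
  have hinj : ∀ z, G.ρ c z = z → z = 0 := fun z hz => by
    have : z ∈ G.Fx c := mem_Fx.2 hz
    rwa [hc, Submodule.mem_bot] at this
  have dc := rlen_add_finrank_Fx (G := G) c
  rw [hc, finrank_bot] at dc
  have du := rlen_add_finrank_Fx (G := G) (u⁻¹ * c)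
  have dw := rlen_add_finrank_Fx (G := G) (w⁻¹ * c)
  have dw' := rlen_add_finrank_Fx (G := G) w
  have hw2 := rlen_eq_finrank (G := G) w
  have hu' := hu
  have hw' := hw
  unfold rle at hu' hw'
  have hmap : (G.Fx (w⁻¹ * c)).map (G.ρ c - 1) = G.Mov w := by
    apply Submodule.eq_of_le_of_finrank_le
    · rintro y ⟨z, hz, rfl⟩
      refine mem_Mov.2 ⟨z, ?_⟩
      rw [← hZ.1 hz]; rfl
    · have hi := LinearMap.ker_eq_bot.1 hc
      rw [(Submodule.equivMapOfInjective _ hi (G.Fx (w⁻¹ * c))).finrank_eq.symm]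
      omega
  have hle : G.Fx (u⁻¹ * c) ≤ G.Fx (w⁻¹ * c) := by
    intro z hz
    have h1 : G.ρ c z - z ∈ G.Mov w := by
      rw [hZ.1 hz]
      exact h (mem_Mov.2 ⟨z, rfl⟩)
    rw [← hmap] at h1
    obtain ⟨z', hz', e⟩ := h1
    have e2 : G.ρ c z' - z' = G.ρ c z - z := e
    have : z' - z = 0 := by
      apply hinj
      rw [map_sub]
      linear_combination e2
    rw [sub_eq_zero] at this
    rwa [← this]
  have hd : Disjoint (G.Fx (u⁻¹ * c)) (G.Fx w) := by
    rw [Submodule.disjoint_def]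
    intro z h1 h2
    apply hinj
    rw [hZ.1 (hle h1), mem_Fx.1 h2]
  have hsup : G.Fx (u⁻¹ * c) ⊔ G.Fx w ≤ G.Fx (u⁻¹ * w) := by
    apply sup_le
    · intro z hz
      rw [mem_Fx, act_mul, ← hZ.1 (hle hz), hZ.1 hz, act_inv_act]
    · intro z hz
      have h2 : z ∈ G.Fx u := mem_Fx_of_ip fun y hy => ip_Fx_Mov hz (h hy)
      rw [mem_Fx, act_mul, mem_Fx.1 hz]
      nth_rewrite 1 [← mem_Fx.1 h2]
      rw [act_inv_act]
  have h7 := Submodule.finrank_mono hsup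
  have h8 := Submodule.finrank_sup_add_finrank_inf_eq (G.Fx (u⁻¹ * c)) (G.Fx w)
  rw [hd.eq_bot, finrank_bot] at h8
  have h9 := rlen_add_finrank_Fx (G := G) (u⁻¹ * w)
  apply rle_of_le
  omega

/-! ### Cones and simple systems -/

open scoped NNReal in
/-- The convex cone generated by a set of vectors. -/
noncomputable abbrev cone (S : Set (B → ℝ)) : Submodule ℝ≥0 (B → ℝ) := Submodule.span ℝ≥0 S

theorem cone_smul {S : Set (B → ℝ)} {c : ℝ} (hc : 0 ≤ c) {x : B → ℝ} (hx : x ∈ cone S) :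
    c • x ∈ cone S :=
  (cone S).smul_mem ⟨c, hc⟩ hx

theorem cone_induction {S : Set (B → ℝ)} {p : (B → ℝ) → Prop} (mem : ∀ x ∈ S, p x) (zero : p 0)
    (hadd : ∀ x y, p x → p y → p (x + y)) (hsmul : ∀ (c : ℝ) x, 0 ≤ c → p x → p (c • x))
    {x : B → ℝ} (hx : x ∈ cone S) : p x :=
  Submodule.span_induction mem zero (fun x y _ _ => hadd x y)
    (fun c x _ => hsmul (c : ℝ) x c.2) hx

theorem cone_nonneg {S : Set (B → ℝ)} (hS : ∀ β ∈ S, ∀ j, 0 ≤ β j) {x : B → ℝ}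
    (hx : x ∈ cone S) : ∀ j, 0 ≤ x j :=
  cone_induction (p := fun x => ∀ j, 0 ≤ x j) hS (fun _ => le_rfl)
    (fun _ _ hx hy j => add_nonneg (hx j) (hy j))
    (fun _ _ hc hx j => mul_nonneg hc (hx j)) hx

theorem cone_le_span {S : Set (B → ℝ)} {x : B → ℝ} (hx : x ∈ cone S) :
    x ∈ Submodule.span ℝ S :=
  cone_induction (p := fun x => x ∈ Submodule.span ℝ S) (fun _ h => Submodule.subset_span h)
    (Submodule.zero_mem _) (fun _ _ => Submodule.add_mem _) (fun c _ _ => Submodule.smul_mem _ c) hx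

/-- A linear functional that is positive on the generators of a cone vanishes only at its apex. -/
theorem cone_eq_zero {S : Set (B → ℝ)} (f : Module.Dual ℝ (B → ℝ)) (hS : ∀ β ∈ S, 0 < f β)
    {x : B → ℝ} (hx : x ∈ cone S) (h0 : f x = 0) : x = 0 := by
  have key : 0 ≤ f x ∧ (f x = 0 → x = 0) := by
    refine cone_induction (p := fun x => 0 ≤ f x ∧ (f x = 0 → x = 0)) ?_ ?_ ?_ ?_ hx
    · exact fun β hβ => ⟨(hS β hβ).le, fun h => absurd h (hS β hβ).ne'⟩
    · simp
    · rintro a b ⟨ha, ha'⟩ ⟨hb, hb'⟩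
      rw [map_add]
      refine ⟨add_nonneg ha hb, fun h => ?_⟩
      rw [ha' (by linarith), hb' (by linarith), add_zero]
    · rintro c a hc ⟨ha, ha'⟩
      rw [map_smul, smul_eq_mul]
      refine ⟨mul_nonneg hc ha, fun h => ?_⟩
      rcases mul_eq_zero.1 h with h | h
      · rw [h, zero_smul]
      · rw [ha' h, smul_zero]
  exact key.2 h0

theorem exists_minimal_generators {P : Set (B → ℝ)} (hP : P.Finite) :
    ∃ D ⊆ P, P ⊆ cone D ∧ ∀ d ∈ D, d ∉ cone (D \ {d}) := by
  classical
  obtain ⟨D, ⟨hD, hPD⟩, hmin⟩ := WellFounded.has_min (measure Set.ncard).wf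
    {D : Set (B → ℝ) | D ⊆ P ∧ P ⊆ cone D} ⟨P, subset_rfl, Submodule.subset_span⟩
  refine ⟨D, hD, hPD, fun d hd hc => ?_⟩
  refine hmin (D \ {d}) ⟨Set.sdiff_subset.trans hD, fun x hx => ?_⟩ ?_
  · have : D ⊆ cone (D \ {d}) := by
      intro e he
      by_cases h : e = d
      · rw [h]; exact hc
      · exact Submodule.subset_span ⟨he, h⟩
    exact Submodule.span_le.2 this (hPD hx)
  · exact Set.ncard_sdiff_singleton_lt_of_mem hd (hP.subset hD)

theorem sum_coord_pos {x : B → ℝ} (hx : ∀ j, 0 ≤ x j) (h0 : x ≠ 0) : 0 < ∑ j, x j := by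
  refine lt_of_le_of_ne (Finset.sum_nonneg fun j _ => hx j) fun h => h0 ?_
  funext j
  exact (Finset.sum_eq_zero_iff_of_nonneg fun j _ => hx j).1 h.symm j (Finset.mem_univ j)

/-- Redundancy of a generator `d` some multiple of which is a nontrivial combination involving the
other generators. -/
theorem not_minimal {D : Set (B → ℝ)} (hD : ∀ d ∈ D, ∀ j, 0 ≤ d j)
    (hmin : ∀ d ∈ D, d ∉ cone (D \ {d})) {d b z : B → ℝ} (hd : d ∈ D) {a : ℝ}
    (hb : b ∈ cone (D \ {d})) (hb0 : b ≠ 0) (hz : z ∈ cone D) (h : a • d = b + z) : False := by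
  have hins : insert d (D \ {d}) = D := by
    simp [Set.insert_eq_of_mem hd]
  rw [← hins] at hz
  obtain ⟨c, z', hz', e⟩ := Submodule.mem_span_insert.1 hz
  have hD' : ∀ d' ∈ D \ {d}, ∀ j, 0 ≤ d' j := fun d' h => hD d' h.1
  have e2 : (a - c : ℝ) • d = b + z' := by
    rw [sub_smul, h, e, NNReal.smul_def]; abel
  have hpos : 0 < a - c := by
    have h1 := sum_coord_pos (cone_nonneg hD' hb) hb0
    have h2 : 0 ≤ ∑ j, z' j := Finset.sum_nonneg fun j _ => cone_nonneg hD' hz' j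
    have h3 : 0 ≤ ∑ j, d j := Finset.sum_nonneg fun j _ => hD d hd j
    have h4 := congrArg (fun x : B → ℝ => ∑ j, x j) e2
    simp only [Pi.smul_apply, smul_eq_mul, ← Finset.mul_sum, Pi.add_apply,
      Finset.sum_add_distrib] at h4
    by_contra hc
    have := mul_nonneg (sub_nonneg.2 (not_lt.1 hc)) h3
    nlinarith
  apply hmin d hd
  have : d = (a - c)⁻¹ • (b + z') := by
    rw [← e2, smul_smul, inv_mul_cancel₀ hpos.ne', one_smul]
  have hmem := cone_smul (inv_nonneg.2 hpos.le) (Submodule.add_mem _ hb hz')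
  rwa [← this] at hmem

/-- A minimal generating set of the cone of positive roots in a subspace is obtuse. -/
theorem obtuse_of_minimal {U : Submodule ℝ (B → ℝ)} {D : Set (B → ℝ)} (hD : D ⊆ G.PosIn U)
    (hcone : G.PosIn U ⊆ cone D) (hmin : ∀ d ∈ D, d ∉ cone (D \ {d})) {d d' : B → ℝ}
    (hd : d ∈ D) (hd' : d' ∈ D) (hne : d ≠ d') : G.ip d d' ≤ 0 := by
  by_contra hpos
  push Not at hpos
  have hnn : ∀ d ∈ D, ∀ j, 0 ≤ d j := fun d h => (hD h).2.1
  obtain ⟨hr, -, hU⟩ := hD hd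
  obtain ⟨hr', -, hU'⟩ := hD hd'
  obtain ⟨t, -, ht⟩ := hr'.exists_reflection
  have hz := hr.act t
  rw [ht d] at hz
  set p := 2 * G.ip d' d / G.ip d' d' with hp
  have hp0 : 0 < p := by
    have := G.ip_pos d' hr'.ne_zero
    rw [hp, G.ip_symm d' d]; positivity
  have hzU : d - p • d' ∈ U := Submodule.sub_mem _ hU (Submodule.smul_mem _ _ hU')
  rcases hz.pos_or_neg with h | h
  · refine not_minimal (a := 1) (b := p • d') hnn hmin hd
      (cone_smul hp0.le (Submodule.subset_span ⟨hd', hne.symm⟩))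
      (smul_ne_zero hp0.ne' hr'.ne_zero) (hcone ⟨hz, h, hzU⟩) (by module)
  · refine not_minimal (a := p) (b := d) hnn hmin hd' (Submodule.subset_span ⟨hd, hne⟩)
      hr.ne_zero (hcone ⟨hz.neg, h, Submodule.neg_mem _ hzU⟩) (by module)

/-- Obtuse nonnegative vectors are linearly independent. -/
theorem notMem_span_of_obtuse {T : Finset (B → ℝ)} {d : B → ℝ} (hd : ∀ j, 0 ≤ d j) (hd0 : d ≠ 0)
    (hT : ∀ η ∈ T, ∀ j, 0 ≤ η j) (hdT : ∀ η ∈ T, G.ip d η ≤ 0)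
    (hTT : ∀ η ∈ T, ∀ η' ∈ T, η ≠ η' → G.ip η η' ≤ 0) :
    d ∉ Submodule.span ℝ (T : Set (B → ℝ)) := by
  intro hs
  obtain ⟨c, -, hc⟩ := Submodule.mem_span_finset.1 hs
  set P := ∑ η ∈ T, (c η)⁺ • η with hP
  set N := ∑ η ∈ T, (c η)⁻ • η with hN
  have e : d = P - N := by
    rw [← hc, hP, hN, ← Finset.sum_sub_distrib]
    refine Finset.sum_congr rfl fun η _ => ?_
    rw [← sub_smul, posPart_sub_negPart]
  have hPN : G.ip P N ≤ 0 := by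
    simp only [hP, hN, map_sum, map_smul, LinearMap.sum_apply, LinearMap.smul_apply, smul_eq_mul]
    refine Finset.sum_nonpos fun η hη => ?_
    rw [Finset.mul_sum]
    refine Finset.sum_nonpos fun η' hη' => ?_
    by_cases h : η = η'
    · subst h
      have : (c η)⁻ * (c η)⁺ = 0 := by
        rcases le_total 0 (c η) with h | h
        · simp [negPart_eq_zero.2 h]
        · simp [posPart_eq_zero.2 h]
      rw [← mul_assoc, this, zero_mul]
    · exact mul_nonpos_of_nonneg_of_nonpos (negPart_nonneg _)
        (mul_nonpos_of_nonneg_of_nonpos (posPart_nonneg _) (hTT η' hη' η hη (Ne.symm h)))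
  have hdP : G.ip d P ≤ 0 := by
    simp only [hP, map_sum, map_smul, smul_eq_mul]
    exact Finset.sum_nonpos fun η hη =>
      mul_nonpos_of_nonneg_of_nonpos (posPart_nonneg _) (hdT η hη)
  have hP0 : P = 0 := by
    apply ip_self_eq_zero (G := G)
    refine le_antisymm ?_ (ip_self_nonneg P)
    rw [e, map_sub, LinearMap.sub_apply, G.ip_symm N P] at hdP
    linarith
  apply hd0
  funext j
  refine le_antisymm ?_ (hd j)
  rw [e, hP0, zero_sub, Pi.neg_apply, hN, Finset.sum_apply, Pi.zero_apply, neg_nonpos]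
  exact Finset.sum_nonneg fun η hη => mul_nonneg (negPart_nonneg _) (hT η hη j)

/-! ### Products of distinct simple reflections -/

theorem simple_apply_ne {i j : B} (h : j ≠ i) (x : B → ℝ) : G.ρ (cs.simple i) x j = x j := by
  simp [G.simple_apply, sroot_ne h]

theorem simple_apply_eq (i : B) (x : B → ℝ) :
    G.ρ (cs.simple i) x = x - x i • sroot i + (G.ρ (cs.simple i) x i) • sroot i := by
  funext j
  by_cases h : j = i
  · subst h; simp [sroot_self]
  · simp [simple_apply_ne h, sroot_ne h]

theorem wordProd_apply_of_notMem {l : List B} {i : B} (h : i ∉ l) (x : B → ℝ) :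
    G.ρ (cs.wordProd l) x i = x i := by
  induction l with
  | nil => simp
  | cons j l ih =>
    rw [List.mem_cons, not_or] at h
    rw [cs.wordProd_cons, act_mul, simple_apply_ne h.1, ih h.2]

theorem ip_sroot_of_mem_Fx {l : List B} (hl : l.Nodup) {x : B → ℝ}
    (hx : x ∈ G.Fx (cs.wordProd l)) : ∀ i ∈ l, G.ip (sroot i) x = 0 := by
  induction l with
  | nil => simp
  | cons i l ih =>
    rw [List.nodup_cons] at hl
    rw [mem_Fx, cs.wordProd_cons, act_mul] at hx
    have h1 : G.ρ (cs.wordProd l) x = G.ρ (cs.simple i) x := by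
      have := congrArg (G.ρ (cs.simple i)) hx
      rwa [← act_mul, cs.simple_mul_simple_self, act_one] at this
    have hp := G.ip_pos _ (sroot_ne_zero i)
    have h2 : G.ip (sroot i) x = 0 := by
      have h3 := congrFun h1 i
      rw [wordProd_apply_of_notMem hl.1, G.simple_apply] at h3
      simp only [Pi.sub_apply, Pi.smul_apply, sroot_self, smul_eq_mul, mul_one] at h3
      have h4 : 2 * G.ip (sroot i) x / G.ip (sroot i) (sroot i) = 0 := by linarith
      rw [div_eq_zero_iff] at h4
      rcases h4 with h4 | h4 <;> linarith
    have h5 : x ∈ G.Fx (cs.wordProd l) := by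
      rw [mem_Fx, h1, G.simple_apply, h2]; simp
    intro j hj
    rcases List.mem_cons.1 hj with rfl | hj
    · exact h2
    · exact ih hl.2 h5 j hj

theorem sroot_mem_Mov {l : List B} (hl : l.Nodup) {i : B} (hi : i ∈ l) :
    sroot i ∈ G.Mov (cs.wordProd l) :=
  mem_Mov_of_ip fun x hx => by rw [G.ip_symm]; exact ip_sroot_of_mem_Fx hl hx i hi

theorem coord_eq_zero_of_mem_Mov {l : List B} {u : W} (hu : rle cs u (cs.wordProd l)) {i : B}
    (hi : i ∉ l) {x : B → ℝ} (hx : x ∈ G.Mov u) : x i = 0 := by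
  obtain ⟨v, rfl⟩ := mem_Mov.1 (Mov_mono hu hx)
  simp [wordProd_apply_of_notMem hi]

theorem mem_Fx_wordProd_eq_zero {l : List B} (hl : l.Nodup) {x : B → ℝ}
    (hx : x ∈ G.Fx (cs.wordProd l)) (hs : ∀ j ∉ l, x j = 0) : x = 0 := by
  apply ip_self_eq_zero (G := G)
  rw [ip_eq_sum]
  refine Finset.sum_eq_zero fun j _ => ?_
  by_cases hj : j ∈ l
  · rw [ip_sroot_of_mem_Fx hl hx j hj, mul_zero]
  · rw [hs j hj, zero_mul]

theorem rlen_simple_mul {u : W} {i : B} (h : sroot i ∈ G.Mov u) :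
    rlen cs (cs.simple i) = 1 ∧ rlen cs (cs.simple i * u) + 1 = rlen cs u :=
  rlen_root_mul (isRoot_sroot i) h (cs.isReflection_simple i) (G.simple_apply i)

theorem Mov_eq_sup_simple {u : W} {i : B} (h : sroot i ∈ G.Mov u) :
    G.Mov u = Submodule.span ℝ {sroot i} ⊔ G.Mov (cs.simple i * u) := by
  rw [Mov_eq_sup (rle_root (isRoot_sroot i) h (cs.isReflection_simple i) (G.simple_apply i)),
    cs.inv_simple, Mov_reflection (isRoot_sroot i) (G.simple_apply i)]

theorem rlen_wordProd_cons (G : GeomRep cs) {l : List B} {i : B} (hl : (i :: l).Nodup) :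
    rlen cs (cs.wordProd (i :: l)) = rlen cs (cs.wordProd l) + 1 := by
  have := (rlen_simple_mul (G := G) (sroot_mem_Mov hl List.mem_cons_self)).2
  rw [cs.wordProd_cons, ← mul_assoc, cs.simple_mul_simple_self, one_mul] at this
  rw [cs.wordProd_cons, this]

theorem rle_tail {l : List B} {i : B} (hl : (i :: l).Nodup) {u : W}
    (hu : rle cs u (cs.wordProd (i :: l))) (hi : sroot i ∈ G.Mov u) :
    rle cs (cs.simple i * u) (cs.wordProd l) := by
  have h1 := rlen_wordProd_cons G hl
  have h2 := (rlen_simple_mul hi).2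
  unfold rle at hu ⊢
  rw [show (cs.simple i * u)⁻¹ * cs.wordProd l = u⁻¹ * cs.wordProd (i :: l) by
    rw [cs.wordProd_cons, mul_inv_rev, cs.inv_simple, mul_assoc]]
  omega

theorem rle_cons {l : List B} {i : B} (hl : (i :: l).Nodup) {v : W}
    (hv : rle cs v (cs.wordProd l)) :
    rle cs (cs.simple i * v) (cs.wordProd (i :: l)) ∧ sroot i ∈ G.Mov (cs.simple i * v) := by
  have h1 := rlen_wordProd_cons G hl
  have h2 := rlen_mul_le (cs := cs) (cs.simple i) v
  have h3 := rlen_reflection_le (cs.isReflection_simple i)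
  have e : (cs.simple i * v)⁻¹ * cs.wordProd (i :: l) = v⁻¹ * cs.wordProd l := by
    rw [cs.wordProd_cons]; group
  have h4 := rlen_mul_le (cs := cs) (cs.simple i * v) (v⁻¹ * cs.wordProd l)
  rw [show cs.simple i * v * (v⁻¹ * cs.wordProd l) = cs.wordProd (i :: l) by
    rw [cs.wordProd_cons]; group] at h4
  unfold rle at hv ⊢
  rw [e]
  refine ⟨by omega, ?_⟩
  have h5 : rle cs (cs.simple i) (cs.simple i * v) := by
    apply rle_of_le
    rw [inv_mul_cancel_left]
    omega
  apply Mov_mono h5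
  rw [Mov_reflection (isRoot_sroot i) (G.simple_apply i)]
  exact Submodule.mem_span_singleton_self _

/-- If `u ≤ s_i c` with `sroot i` in the moved space of `u`, then removing the `i`-th coordinate
sends the cone of positive roots in the moved space of `u` to that of `s_i u`. The reason is that
in the simple system of `Mov u` only a multiple of `sroot i` has a nonzero `i`-th coordinate. -/
theorem face {l : List B} {i : B} (hl : (i :: l).Nodup) {u : W}
    (hu : rle cs u (cs.wordProd (i :: l))) (hi : sroot i ∈ G.Mov u) {x : B → ℝ}
    (hx : x ∈ cone (G.PosIn (G.Mov u))) :
    x - x i • sroot i ∈ cone (G.PosIn (G.Mov (cs.simple i * u))) := by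
  classical
  have hfin : (G.PosIn (G.Mov u)).Finite := finite_roots.subset fun β h => h.1
  have hil : i ∉ l := (List.nodup_cons.1 hl).1
  have hsup := Mov_eq_sup_simple hi
  have hle : G.Mov (cs.simple i * u) ≤ G.Mov u := by rw [hsup]; exact le_sup_right
  have hzero : ∀ y ∈ G.Mov (cs.simple i * u), y i = 0 := fun y hy =>
    coord_eq_zero_of_mem_Mov (rle_tail hl hu hi) hil hy
  have hmem : ∀ y ∈ G.Mov u, y i = 0 → y ∈ G.Mov (cs.simple i * u) := by
    intro y hy h0
    rw [hsup] at hy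
    obtain ⟨a, ha, b, hb, rfl⟩ := Submodule.mem_sup.1 hy
    obtain ⟨k, rfl⟩ := Submodule.mem_span_singleton.1 ha
    rw [Pi.add_apply, hzero b hb, Pi.smul_apply, sroot_self, smul_eq_mul, mul_one, add_zero] at h0
    rw [h0, zero_smul, zero_add]
    exact hb
  obtain ⟨D, hD, hcone, hmin⟩ := exists_minimal_generators hfin
  have hDfin := hfin.subset hD
  have hnn : ∀ d ∈ D, ∀ j, 0 ≤ d j := fun d h => (hD h).2.1
  have hob : ∀ d ∈ D, ∀ d' ∈ D, d ≠ d' → G.ip d d' ≤ 0 := fun d hd d' hd' hne =>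
    obtuse_of_minimal hD hcone hmin hd hd' hne
  have hei : sroot i ∈ G.PosIn (G.Mov u) := by
    refine ⟨isRoot_sroot i, fun j => ?_, hi⟩
    by_cases h : j = i
    · subst h; simp [sroot_self]
    · simp [sroot_ne h]
  -- some element of the simple system is a multiple of `sroot i`
  obtain ⟨d₁, hd₁, hk⟩ : ∃ d ∈ D, ∀ j, j ≠ i → d j = 0 := by
    by_contra hc
    push Not at hc
    let f : Module.Dual ℝ (B → ℝ) := ∑ j ∈ Finset.univ.erase i, LinearMap.proj j
    have hf : ∀ y, f y = ∑ j ∈ Finset.univ.erase i, y j := fun y => by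
      simp [f, LinearMap.sum_apply]
    refine sroot_ne_zero i (cone_eq_zero f ?_ (hcone hei) ?_)
    · intro d hd
      obtain ⟨j, hj, hj0⟩ := hc d hd
      rw [hf]
      exact Finset.sum_pos' (fun j _ => hnn d hd j)
        ⟨j, by simp [hj], lt_of_le_of_ne (hnn d hd j) hj0.symm⟩
    · rw [hf]
      exact Finset.sum_eq_zero fun j hj => sroot_ne (Finset.ne_of_mem_erase hj)
  have hd₁e : d₁ = d₁ i • sroot i := by
    funext j
    by_cases h : j = i
    · subst h; simp [sroot_self]
    · simp [sroot_ne h, hk j h]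
  have hd₁0 : d₁ i ≠ 0 := fun h => (hD hd₁).1.ne_zero (by rw [hd₁e, h, zero_smul])
  -- an element of the cone with vanishing `i`-th coordinate only involves such generators
  have hsplit : ∀ y ∈ cone D, y i = 0 → y ∈ cone {η ∈ D | η i = 0} := by
    intro y hy h0
    have : D = {η ∈ D | η i = 0} ∪ {η ∈ D | ¬ η i = 0} := by
      ext η
      simp only [Set.mem_union, Set.mem_ofPred_eq]
      tauto
    rw [this, cone, Submodule.span_union] at hy
    obtain ⟨a, ha, b, hb, rfl⟩ := Submodule.mem_sup.1 hy
    have ha0 := cone_nonneg (fun β hβ => hnn β hβ.1) ha i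
    have hb0 := cone_nonneg (fun β hβ => hnn β hβ.1) hb i
    rw [Pi.add_apply] at h0
    have : b = 0 := by
      refine cone_eq_zero (LinearMap.proj i) ?_ hb ?_
      · exact fun β hβ => lt_of_le_of_ne (hnn β hβ.1 i) (Ne.symm hβ.2)
      · simp only [LinearMap.proj_apply]; linarith
    rw [this, add_zero]
    exact ha
  have hclaim : ∀ d ∈ D, d ≠ d₁ → d i = 0 := by
    intro d hd hne
    by_contra hdi
    let T : Finset (B → ℝ) := insert d₁ (hDfin.toFinset.filter fun η => η i = 0)
    have hTD : ∀ η ∈ T, η ∈ D ∧ η ≠ d := by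
      intro η hη
      rcases Finset.mem_insert.1 hη with rfl | hη
      · exact ⟨hd₁, hne.symm⟩
      · simp only [Finset.mem_filter, Set.Finite.mem_toFinset] at hη
        exact ⟨hη.1, fun h => hdi (h ▸ hη.2)⟩
    refine notMem_span_of_obtuse (G := G) (T := T) (hnn d hd) (hD hd).1.ne_zero
      (fun η hη => hnn η (hTD η hη).1) (fun η hη => hob d hd η (hTD η hη).1 (hTD η hη).2.symm)
      (fun η hη η' hη' h => hob η (hTD η hη).1 η' (hTD η' hη').1 h) ?_
    have hall : G.Mov u ≤ Submodule.span ℝ (T : Set (B → ℝ)) := by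
      rw [hsup]
      apply sup_le
      · rw [Submodule.span_singleton_le_iff_mem]
        have : sroot i = (d₁ i)⁻¹ • d₁ := by
          nth_rewrite 2 [hd₁e]
          rw [smul_smul, inv_mul_cancel₀ hd₁0, one_smul]
        rw [this]
        exact Submodule.smul_mem _ _ (Submodule.subset_span (by simp [T]))
      · refine (Mov_le_span _).trans (Submodule.span_le.2 fun β hβ => ?_)
        have h1 := hsplit β (hcone ⟨hβ.1, hβ.2.1, hle hβ.2.2⟩) (hzero β hβ.2.2)
        refine Submodule.span_mono ?_ (cone_le_span h1)
        intro η hη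
        simp only [T, Finset.coe_insert, Finset.coe_filter, Set.Finite.mem_toFinset]
        exact Or.inr hη
    exact hall (hD hd).2.2
  have hgen : ∀ d ∈ D, d - d i • sroot i ∈ cone (G.PosIn (G.Mov (cs.simple i * u))) := by
    intro d hd
    by_cases h : d = d₁
    · subst h
      rw [← hd₁e, sub_self]
      exact Submodule.zero_mem _
    · have h0 := hclaim d hd h
      rw [h0, zero_smul, sub_zero]
      exact Submodule.subset_span ⟨(hD hd).1, (hD hd).2.1, hmem d (hD hd).2.2 h0⟩
  refine cone_induction
    (p := fun x => x - x i • sroot i ∈ cone (G.PosIn (G.Mov (cs.simple i * u)))) hgen ?_ ?_ ?_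
    (Submodule.span_le.2 hcone hx)
  · simp
  · intro a b ha hb
    have := Submodule.add_mem _ ha hb
    rwa [show a - a i • sroot i + (b - b i • sroot i) = a + b - (a + b) i • sroot i by
      rw [Pi.add_apply]; module] at this
  · intro c a hc ha
    have := cone_smul hc ha
    rwa [show c • (a - a i • sroot i) = c • a - (c • a) i • sroot i by
      rw [Pi.smul_apply, smul_eq_mul]; module] at this

/-! ### Smallest noncrossing moved space around a vector -/

/-- There is `u₀ ≤ s_l` with `x` in its moved space, which is contained in the moved space of every
`u ≤ s_l` for which `x` lies in the cone of positive roots of `Mov u`. -/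
def HasCarrier (G : GeomRep cs) (l : List B) (x : B → ℝ) : Prop :=
  ∃ u₀, rle cs u₀ (cs.wordProd l) ∧ x ∈ G.Mov u₀ ∧
    ∀ u, rle cs u (cs.wordProd l) → x ∈ cone (G.PosIn (G.Mov u)) → G.Mov u₀ ≤ G.Mov u

theorem hasCarrier_zero (l : List B) : HasCarrier G l 0 :=
  ⟨1, one_rle _, Submodule.zero_mem _, fun u _ _ => by rw [Mov_one]; exact bot_le⟩

/-- A simple reflection permutes the positive roots other than the multiples of its own root. -/
theorem simple_mem_cone {i : B} {u : W} (hi : sroot i ∉ G.Mov u) {x : B → ℝ}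
    (hx : x ∈ cone (G.PosIn (G.Mov u))) : G.ρ (cs.simple i) x ∈
      cone (G.PosIn (G.Mov (cs.simple i * u * (cs.simple i)⁻¹))) := by
  refine cone_induction (p := fun x => G.ρ (cs.simple i) x ∈
      cone (G.PosIn (G.Mov (cs.simple i * u * (cs.simple i)⁻¹)))) ?_ ?_ ?_ ?_ hx
  · rintro β ⟨hr, hnn, hβ⟩
    refine Submodule.subset_span ⟨hr.act _, ?_, mem_Mov_conj.2 (by rwa [act_inv_act])⟩
    rcases (hr.act (cs.simple i)).pos_or_neg with h | h
    · exact h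
    · exfalso
      have h0 : ∀ j, j ≠ i → β j = 0 := by
        intro j hj
        have := h j
        rw [Pi.neg_apply, simple_apply_ne hj] at this
        linarith [hnn j]
      have e : β = β i • sroot i := by
        funext j
        by_cases h : j = i
        · subst h; simp [sroot_self]
        · simp [sroot_ne h, h0 j h]
      have hi0 : β i ≠ 0 := fun h => hr.ne_zero (by rw [e, h, zero_smul])
      apply hi
      have : sroot i = (β i)⁻¹ • β := by
        nth_rewrite 2 [e]
        rw [smul_smul, inv_mul_cancel₀ hi0, one_smul]
      rw [this]
      exact Submodule.smul_mem _ _ hβ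
  · rw [map_zero]; exact Submodule.zero_mem _
  · intro a b ha hb
    rw [map_add]; exact Submodule.add_mem _ ha hb
  · intro c a hc ha
    rw [map_smul]; exact cone_smul hc ha

theorem wordProd_rotate (l : List B) (i : B) :
    cs.wordProd (l ++ [i]) = cs.simple i * cs.wordProd (i :: l) * (cs.simple i)⁻¹ := by
  rw [cs.wordProd_append, cs.wordProd_singleton, cs.wordProd_cons, cs.inv_simple, ← mul_assoc,
    cs.simple_mul_simple_self, one_mul]

/-- If `s_i x` still has a nonnegative `i`-th coordinate, the carrier of `x` is obtained from the
carrier of `s_i x` for the rotated word by conjugation with `s_i`. -/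
theorem hasCarrier_of_rotate {l : List B} {i : B} (hl : (i :: l).Nodup) {x : B → ℝ}
    (h0 : 0 ≤ G.ρ (cs.simple i) x i)
    (h : HasCarrier G (l ++ [i]) (G.ρ (cs.simple i) x)) : HasCarrier G (i :: l) x := by
  obtain ⟨u₀, hu₀, hx₀, hmin⟩ := h
  have hss : ∀ a : W, (cs.simple i)⁻¹ * (cs.simple i * a * (cs.simple i)⁻¹) * (cs.simple i)⁻¹⁻¹ = a :=
    fun a => by group
  have hback : ∀ a : W, cs.simple i * ((cs.simple i)⁻¹ * a * (cs.simple i)⁻¹⁻¹) * (cs.simple i)⁻¹ = a :=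
    fun a => by group
  refine ⟨(cs.simple i)⁻¹ * u₀ * (cs.simple i)⁻¹⁻¹, ?_, ?_, ?_⟩
  · have := rle_conj (cs.simple i)⁻¹ hu₀
    rwa [wordProd_rotate, hss] at this
  · rw [mem_Mov_conj, inv_inv]; exact hx₀
  · intro u hu hxu
    have hu' := rle_conj (cs.simple i) hu
    rw [← wordProd_rotate] at hu'
    have hxu' : G.ρ (cs.simple i) x ∈
        cone (G.PosIn (G.Mov (cs.simple i * u * (cs.simple i)⁻¹))) := by
      by_cases hi : sroot i ∈ G.Mov u
      · have hsub : G.Mov u ≤ G.Mov (cs.simple i * u * (cs.simple i)⁻¹) := by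
          intro y hy
          rw [mem_Mov_conj, cs.inv_simple, G.simple_apply]
          exact Submodule.sub_mem _ hy (Submodule.smul_mem _ _ hi)
        have hle : G.Mov (cs.simple i * u) ≤ G.Mov u := by
          rw [Mov_eq_sup_simple hi]; exact le_sup_right
        rw [simple_apply_eq]
        refine Submodule.add_mem _ (Submodule.span_mono ?_ (face hl hu hi hxu)) (cone_smul h0 ?_)
        · exact fun β hβ => ⟨hβ.1, hβ.2.1, hsub (hle hβ.2.2)⟩
        · refine Submodule.subset_span ⟨isRoot_sroot i, fun j => ?_, hsub hi⟩
          by_cases h : j = i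
          · subst h; simp [sroot_self]
          · simp [sroot_ne h]
      · exact simple_mem_cone hi hxu
    have h1 := hmin _ hu' hxu'
    intro y hy
    rw [mem_Mov_conj, inv_inv] at hy
    have h2 := h1 hy
    rwa [mem_Mov_conj, act_inv_act] at h2

/-- If the `i`-th coordinate of `s_i x` is negative, every `u` admitted for `x` has `sroot i` in its
moved space, so that the letter `i` can be removed from the word and from `x`. -/
theorem hasCarrier_of_tail {l : List B} {i : B} (hl : (i :: l).Nodup) {x : B → ℝ}
    (h0 : G.ρ (cs.simple i) x i < 0)
    (h : HasCarrier G l (x - x i • sroot i)) : HasCarrier G (i :: l) x := by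
  obtain ⟨u₀, hu₀, hx₀, hmin⟩ := h
  obtain ⟨hle, hi₀⟩ := rle_cons (G := G) hl hu₀
  have hsup := Mov_eq_sup_simple hi₀
  rw [← mul_assoc, cs.simple_mul_simple_self, one_mul] at hsup
  refine ⟨cs.simple i * u₀, hle, ?_, ?_⟩
  · rw [hsup, ← sub_add_cancel x (x i • sroot i), add_comm]
    exact Submodule.add_mem_sup (Submodule.smul_mem _ _ (Submodule.mem_span_singleton_self _)) hx₀
  · intro u hu hxu
    have hi : sroot i ∈ G.Mov u := by
      by_contra hi
      have := cone_nonneg (fun β hβ => hβ.2.1) (simple_mem_cone hi hxu) i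
      linarith
    rw [hsup, Mov_eq_sup_simple hi]
    exact sup_le_sup_left (hmin _ (rle_tail hl hu hi) (face hl hu hi hxu)) _

/-- Rotating `l` applies simple reflections to `x`; if this never allowed a reduction to a shorter
word, all `c⁻ᵐ x` would be nonnegative, and their sum would be a nonzero vector fixed by `c`. -/
theorem hasCarrier (G : GeomRep cs) {l : List B} (hl : l.Nodup) {x : B → ℝ} (hx : ∀ j, 0 ≤ x j)
    (hs : ∀ j ∉ l, x j = 0) : HasCarrier G l x := by
  induction hn : l.length generalizing l x with
  | zero =>
    rw [List.length_eq_zero_iff] at hn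
    subst hn
    have : x = 0 := funext fun j => hs j (by simp)
    rw [this]
    exact hasCarrier_zero _
  | succ n ih =>
    by_contra hbad
    let Bad : List B → (B → ℝ) → Prop := fun l x =>
      l.Nodup ∧ l.length = n + 1 ∧ (∀ j, 0 ≤ x j) ∧ (∀ j ∉ l, x j = 0) ∧ ¬ HasCarrier G l x
    have hrot : ∀ i l x, Bad (i :: l) x → Bad (l ++ [i]) (G.ρ (cs.simple i) x) := by
      rintro i l x ⟨hl, hn, hx, hs, hb⟩
      have hil := List.nodup_cons.1 hl
      have h0 : 0 ≤ G.ρ (cs.simple i) x i := by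
        by_contra hc
        refine hb (hasCarrier_of_tail hl (not_le.1 hc) (ih hil.2 ?_ ?_ (by simpa using hn)))
        · intro j
          by_cases h : j = i
          · subst h; simp [sroot_self]
          · simpa [sroot_ne h] using hx j
        · intro j hj
          by_cases h : j = i
          · subst h; simp [sroot_self]
          · simpa [sroot_ne h] using hs j (by simp [h, hj])
      refine ⟨?_, by simpa using hn, ?_, ?_, fun hc => hb (hasCarrier_of_rotate hl h0 hc)⟩
      · rw [List.nodup_append_comm]; simpa using hl
      · intro j
        by_cases h : j = i
        · rw [h]; exact h0
        · rw [simple_apply_ne h]; exact hx j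
      · intro j hj
        simp only [List.mem_append, List.mem_singleton, not_or] at hj
        rw [simple_apply_ne hj.2]
        exact hs j (by simp [hj.1, hj.2])
    have hrots : ∀ p q x, Bad (p ++ q) x → Bad (q ++ p) (G.ρ (cs.wordProd p)⁻¹ x) := by
      intro p
      induction p with
      | nil => intro q x h; simpa using h
      | cons i p ihp =>
        intro q x h
        have h1 := hrot i (p ++ q) x h
        rw [List.append_assoc] at h1
        have h2 := ihp _ _ h1
        rw [List.append_assoc, ← act_mul] at h2
        rw [cs.wordProd_cons, mul_inv_rev, cs.inv_simple]
        exact h2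
    set c := (cs.wordProd l)⁻¹ with hc
    have hpow : ∀ m, Bad l (G.ρ (c ^ m) x) := by
      intro m
      induction m with
      | zero => simpa using ⟨hl, hn, hx, hs, hbad⟩
      | succ m ihm =>
        have := hrots l [] (G.ρ (c ^ m) x) (by simpa using ihm)
        rw [pow_succ', act_mul]
        simpa using this
    set N := Fintype.card W with hN
    set X := ∑ m ∈ Finset.range N, G.ρ (c ^ m) x with hX
    have hcX : G.ρ c X = X := by
      have h1 := Finset.sum_range_succ (fun m => G.ρ (c ^ m) x) N
      rw [Finset.sum_range_succ', pow_zero, act_one, hN, pow_card_eq_one, act_one] at h1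
      rw [hX, map_sum]
      simp only [← act_mul, ← pow_succ']
      exact add_right_cancel h1
    have hX0 : X = 0 := by
      refine mem_Fx_wordProd_eq_zero (G := G) hl ?_ ?_
      · rw [mem_Fx]
        nth_rewrite 1 [← hcX]
        rw [hc, act_act_inv]
      · intro j hj
        rw [hX, Finset.sum_apply]
        exact Finset.sum_eq_zero fun m _ => (hpow m).2.2.2.1 j hj
    apply hbad
    have hx0 : x = 0 := by
      funext j
      have h1 := congrFun hX0 j
      rw [hX, Finset.sum_apply, Pi.zero_apply,
        Finset.sum_eq_zero_iff_of_nonneg fun m _ => (hpow m).2.2.1 j] at h1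
      simpa using h1 0 (Finset.mem_range.2 Fintype.card_pos)
    rw [hx0]
    exact hasCarrier_zero _

/-! ### Meets and joins below a Coxeter element -/

/-- A vector in the cone of `P` generic enough to lie in no moved space that does not already
contain `P`. -/
theorem exists_generic (G : GeomRep cs) {P : Set (B → ℝ)} (hP : P.Finite) :
    ∃ x ∈ cone P, ∀ w : W, x ∈ G.Mov w → P ⊆ G.Mov w := by
  induction P, hP using Set.Finite.induction_on with
  | empty => exact ⟨0, Submodule.zero_mem _, fun w _ => Set.empty_subset _⟩
  | @insert β P _ _ ih =>
    obtain ⟨x, hx, hgen⟩ := ih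
    -- for every `w`, at most one parameter `t` is bad
    have hb : ∀ w : W, ∃ b : ℝ, ∀ t, t ≠ b → x + t • β ∈ G.Mov w → insert β P ⊆ G.Mov w := by
      intro w
      by_cases h : ∃ b : ℝ, x + b • β ∈ G.Mov w
      · obtain ⟨b, hb⟩ := h
        refine ⟨b, fun t ht hm => ?_⟩
        have hβ : β ∈ G.Mov w := by
          have h1 := Submodule.sub_mem _ hm hb
          rw [show x + t • β - (x + b • β) = (t - b) • β by module] at h1
          exact (Submodule.smul_mem_iff _ (sub_ne_zero.2 ht)).1 h1
        have hxw : x ∈ G.Mov w :=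
          (Submodule.add_mem_iff_left _ (Submodule.smul_mem _ b hβ)).1 hb
        exact Set.insert_subset hβ (hgen w hxw)
      · push Not at h
        exact ⟨0, fun t _ hm => absurd hm (h t)⟩
    choose b hb using hb
    obtain ⟨t, ht, hbt⟩ := (Set.Ici_infinite (0 : ℝ)).exists_notMem_finite (Set.finite_range b)
    refine ⟨x + t • β, Submodule.add_mem _ (Submodule.span_mono (Set.subset_insert _ _) hx)
      (cone_smul ht (Submodule.subset_span (Set.mem_insert _ _))), fun w hm => ?_⟩
    exact hb w t (fun h => hbt ⟨w, h.symm⟩) hm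

/-- The meet is the carrier of a generic vector in the cone of positive roots of
`Mov u₁ ∩ Mov u₂`. -/
theorem exists_meet_wordProd (G : GeomRep cs) {l : List B} (hl : l.Nodup) (hall : ∀ i, i ∈ l)
    {u₁ u₂ : W} (h₁ : rle cs u₁ (cs.wordProd l)) (h₂ : rle cs u₂ (cs.wordProd l)) :
    ∃ m, rle cs m u₁ ∧ rle cs m u₂ ∧ ∀ y, rle cs y u₁ → rle cs y u₂ → rle cs y m := by
  have hc : G.Fx (cs.wordProd l) = ⊥ := by
    rw [Submodule.eq_bot_iff]
    exact fun x hx => mem_Fx_wordProd_eq_zero hl hx fun j hj => absurd (hall j) hj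
  have hfin : (G.PosIn (G.Mov u₁ ⊓ G.Mov u₂)).Finite := finite_roots.subset fun β h => h.1
  obtain ⟨x, hx, hgen⟩ := exists_generic G hfin
  obtain ⟨m, hm, hxm, hmin⟩ := hasCarrier G hl (cone_nonneg (fun β hβ => hβ.2.1) hx)
    fun j hj => absurd (hall j) hj
  have hcone : ∀ {U : Submodule ℝ (B → ℝ)}, G.Mov u₁ ⊓ G.Mov u₂ ≤ U → x ∈ cone (G.PosIn U) := by
    intro U hU
    have hsub : G.PosIn (G.Mov u₁ ⊓ G.Mov u₂) ⊆ G.PosIn U :=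
      fun β hβ => ⟨hβ.1, hβ.2.1, hU hβ.2.2⟩
    exact Submodule.span_mono hsub hx
  refine ⟨m, ?_, ?_, ?_⟩
  · exact rle_of_Mov_le hc hm h₁ (hmin u₁ h₁ (hcone inf_le_left))
  · exact rle_of_Mov_le hc hm h₂ (hmin u₂ h₂ (hcone inf_le_right))
  · intro y hy₁ hy₂
    refine rle_of_Mov_le hc (rle_trans hy₁ h₁) hm ((Mov_le_span y).trans (Submodule.span_le.2 ?_))
    exact fun β hβ => hgen m hxm ⟨hβ.1, hβ.2.1, Mov_mono hy₁ hβ.2.2, Mov_mono hy₂ hβ.2.2⟩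

end Finite

end GeomRep

theorem exists_meet [Fintype B] [Fintype W] {cs : CoxeterSystem M W} {γ : W}
    (hγ : IsCoxeterElement cs γ) {u₁ u₂ : W} (h₁ : rle cs u₁ γ) (h₂ : rle cs u₂ γ) :
    ∃ m, rle cs m u₁ ∧ rle cs m u₂ ∧ ∀ y, rle cs y u₁ → rle cs y u₂ → rle cs y m := by
  obtain ⟨v, l, hl, hall, rfl⟩ := hγ
  have hcc : ∀ a : W, v⁻¹ * (v * a * v⁻¹) * v⁻¹⁻¹ = a := fun a => by group
  have hcc' : ∀ a : W, v * (v⁻¹ * a * v⁻¹⁻¹) * v⁻¹ = a := fun a => by group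
  have h₁' := rle_conj v⁻¹ h₁
  have h₂' := rle_conj v⁻¹ h₂
  rw [hcc] at h₁' h₂'
  obtain ⟨m, hm₁, hm₂, hm⟩ :=
    GeomRep.exists_meet_wordProd (GeomRep.ofFinite cs) hl hall h₁' h₂'
  refine ⟨v * m * v⁻¹, ?_, ?_, fun y hy₁ hy₂ => ?_⟩
  · have := rle_conj v hm₁
    rwa [hcc'] at this
  · have := rle_conj v hm₂
    rwa [hcc'] at this
  · have := rle_conj v (hm _ (rle_conj v⁻¹ hy₁) (rle_conj v⁻¹ hy₂))
    rwa [hcc'] at this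

/-- The interval `[1, γ]` has joins: the Kreweras complement turns meets into joins. -/
theorem exists_join [Fintype B] [Fintype W] {cs : CoxeterSystem M W} {γ : W}
    (hγ : IsCoxeterElement cs γ) {u w : W} (hu : rle cs u γ) (hw : rle cs w γ) :
    ∃ p, IsIntervalLUB cs γ {u, w} p := by
  obtain ⟨m, h₁, h₂, hm⟩ := exists_meet hγ (rle_inv_mul hu) (rle_inv_mul hw)
  have hmγ := rle_trans h₁ (rle_inv_mul hu)
  -- `m = p⁻¹ * γ` for `p = γ * m⁻¹`
  have hback : ∀ {a : W}, rle cs a γ → rle cs m (a⁻¹ * γ) → rle cs a (γ * m⁻¹) := by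
    intro a ha h
    have := rle_conj γ (rle_compl h (rle_inv_mul ha))
    rwa [show γ * ((a⁻¹ * γ)⁻¹ * γ) * γ⁻¹ = a * (γ * 1 * γ⁻¹) by group, mul_one, mul_inv_cancel,
      mul_one, show γ * (m⁻¹ * γ) * γ⁻¹ = γ * m⁻¹ by group] at this
  refine ⟨γ * m⁻¹, rle_mul_inv hmγ, ?_, ?_⟩
  · rintro x (rfl | rfl)
    · exact hback hu h₁
    · exact hback hw h₂
  · intro r hr h
    have h3 := hm (r⁻¹ * γ) (rle_compl (h u (by simp)) hr) (rle_compl (h w (by simp)) hr)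
    have := rle_conj γ (rle_compl h3 hmγ)
    rwa [show γ * (m⁻¹ * γ) * γ⁻¹ = γ * m⁻¹ by group,
      show γ * ((r⁻¹ * γ)⁻¹ * γ) * γ⁻¹ = r * (γ * 1 * γ⁻¹) by group, mul_one, mul_inv_cancel,
      mul_one] at this

/-! ### The positive monoid -/

section Monoid

variable {cs : CoxeterSystem M W} {γ : W}

theorem div_rle {a b : W} (h1 : rle cs a b) (h2 : rle cs b γ) : rle cs (a⁻¹ * b) γ := by
  have h : rle cs (a⁻¹ * b) (a⁻¹ * γ) :=
    rle_left_cancel (x := a) (by simpa using h1) (by simpa using h2)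
  exact rle_trans h (rle_inv_mul (rle_trans h1 h2))

theorem pgen_one : pgen cs γ 1 = 1 := by simp [pgen]

theorem pgen_coe (g : NCGen cs γ) :
    pgen cs γ (g : W) = PresentedMonoid.mk (posRels cs γ) (FreeMonoid.of g) := by
  rw [pgen, dif_pos g.2]
  rfl

theorem pgen_mul {a b : W} (h1 : rle cs a (a * b)) (h2 : rle cs (a * b) γ) :
    pgen cs γ a * pgen cs γ b = pgen cs γ (a * b) := by
  by_cases ha : a = 1
  · simp [ha, pgen_one]
  by_cases hb : b = 1
  · simp [hb, pgen_one]
  have hl : rlen cs a + rlen cs b = rlen cs (a * b) := by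
    have h := h1
    rw [rle, inv_mul_cancel_left] at h
    exact h.symm
  have hab : a * b ≠ 1 := fun h => by
    rw [h, rlen_one] at hl
    exact ha (eq_one_of_rlen (cs := cs) (by omega))
  have hb' : rle cs b γ := by simpa using div_rle h1 h2
  have key := PresentedMonoid.mk_eq_mk_of_rel (rels := posRels cs γ)
    ⟨⟨a, ha, rle_trans h1 h2⟩, ⟨b, hb, hb'⟩, ⟨a * b, hab, h2⟩, rfl, rfl, rfl, hl⟩
  rw [map_mul, ← pgen_coe, ← pgen_coe, ← pgen_coe] at key
  exact key

theorem pgen_split {a b c : W} (h1 : rle cs a b) (h2 : rle cs b c) (h3 : rle cs c γ) :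
    pgen cs γ (a⁻¹ * c) = pgen cs γ (a⁻¹ * b) * pgen cs γ (b⁻¹ * c) := by
  have e : a⁻¹ * c = a⁻¹ * b * (b⁻¹ * c) := by group
  have h4 : rle cs (a⁻¹ * b) (a⁻¹ * c) :=
    rle_left_cancel (x := a) (by simpa using h1) (by simpa using h2)
  rw [pgen_mul (by rwa [← e]) (by rw [← e]; exact div_rle (rle_trans h1 h2) h3), ← e]

/-- The length homomorphism `Γ₊ → ℕ`, sending `⟨w⟩` to the reflection length of `w`; the
relations of `Γ₊` are homogeneous. -/
noncomputable def weight (cs : CoxeterSystem M W) (γ : W) :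
    PosMonoid cs γ →* Multiplicative ℕ :=
  PresentedMonoid.lift (fun g : NCGen cs γ => Multiplicative.ofAdd (rlen cs (g : W))) (by
    rintro _ _ ⟨w₁, w₂, w₃, rfl, rfl, -, h⟩
    simp [← h])

theorem weight_of (g : NCGen cs γ) :
    (weight cs γ (PresentedMonoid.mk (posRels cs γ) (FreeMonoid.of g))).toAdd =
      rlen cs (g : W) := rfl

/-- The conclusion of the theorem for the equation `⟨u⟩A = ⟨w⟩D`: the tails `A` and `D` are
obtained from a common `C` by completing `u` and `w` to their join. -/
def Completes (cs : CoxeterSystem M W) (γ u w : W) (A D : PosMonoid cs γ) : Prop :=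
  ∃ e f : W, rle cs e γ ∧ rle cs f γ ∧ ∃ C : PosMonoid cs γ,
    A = pgen cs γ e * C ∧ D = pgen cs γ f * C ∧
    u * e = w * f ∧ IsIntervalLUB cs γ {u, w} (u * e)

theorem isIntervalLUB_of_rle {u w : W} (h : rle cs u w) (hw : rle cs w γ) :
    IsIntervalLUB cs γ {u, w} w := by
  refine ⟨hw, ?_, fun r _ hr => hr w (by simp)⟩
  rintro x (rfl | rfl)
  · exact h
  · exact rle_refl _

theorem Completes.symm {u w : W} {A D : PosMonoid cs γ} (h : Completes cs γ u w A D) :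
    Completes cs γ w u D A := by
  obtain ⟨e, f, he, hf, C, hA, hD, huw, hl⟩ := h
  refine ⟨f, e, hf, he, C, hD, hA, huw.symm, ?_⟩
  rw [Set.pair_comm, ← huw]
  exact hl

theorem Completes.of_rle {u w : W} (h : rle cs u w) (hw : rle cs w γ) {A D : PosMonoid cs γ}
    (hA : A = pgen cs γ (u⁻¹ * w) * D) : Completes cs γ u w A D := by
  refine ⟨u⁻¹ * w, 1, div_rle h hw, one_rle _, D, hA, by simp [pgen_one], by simp, ?_⟩
  rw [mul_inv_cancel_left]
  exact isIntervalLUB_of_rle h hw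

theorem Completes.mul_right {u w : W} {A D : PosMonoid cs γ} (h : Completes cs γ u w A D)
    (E : PosMonoid cs γ) : Completes cs γ u w (A * E) (D * E) := by
  obtain ⟨e, f, he, hf, C, hA, hD, huw, hl⟩ := h
  exact ⟨e, f, he, hf, C * E, by rw [hA, mul_assoc], by rw [hD, mul_assoc], huw, hl⟩

/-- The theorem for all equations `⟨u⟩A = ⟨w⟩D` between elements of weight less than `N`. -/
def CompletesBelow (cs : CoxeterSystem M W) (γ : W) (N : ℕ) : Prop :=
  ∀ (u w : W) (A D : PosMonoid cs γ), rle cs u γ → rle cs w γ →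
    pgen cs γ u * A = pgen cs γ w * D →
    (weight cs γ (pgen cs γ u * A)).toAdd < N → Completes cs γ u w A D

/-- Transitivity: from `⟨u⟩A = ⟨x⟩D` and `⟨x⟩D = ⟨w⟩E`, two factorizations of `D` are
compared by the smaller case. This yields an upper bound `z` of `u` and `w` through which both
tails factor; the join `p ≤ z` of `u` and `w` then does the job. -/
theorem Completes.trans [Fintype B] [Fintype W] (hγ : IsCoxeterElement cs γ) {N : ℕ}
    (hN : CompletesBelow cs γ N) {u x w : W} {A D E : PosMonoid cs γ} (hu : rle cs u γ)
    (hx : rle cs x γ) (hw : rle cs w γ) (h1 : Completes cs γ u x A D)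
    (h2 : Completes cs γ x w D E) (hD : (weight cs γ D).toAdd < N) :
    Completes cs γ u w A E := by
  obtain ⟨e₁, f₁, -, hf₁, C₁, rfl, hD₁, hz₁, hl₁⟩ := h1
  obtain ⟨e₂, f₂, he₂, -, C₂, hD₂, rfl, hz₂, hl₂⟩ := h2
  obtain ⟨g, h, -, -, C₃, rfl, rfl, hgh, hl₃⟩ :=
    hN f₁ e₂ C₁ C₂ hf₁ he₂ (hD₁.symm.trans hD₂) (by rwa [← hD₁])
  have hxf : rle cs x (x * f₁) := by rw [← hz₁]; exact hl₁.2.1 x (by simp)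
  have hxe : rle cs x (x * e₂) := hl₂.2.1 x (by simp)
  have hxγ : rle cs x (x * (x⁻¹ * γ)) := by simpa using hx
  -- `x⁻¹γ` is an upper bound of `f₁` and `e₂`, hence of their join `f₁g = e₂h`
  have hle : rle cs (f₁ * g) (x⁻¹ * γ) := by
    refine hl₃.2.2 _ (rle_inv_mul hx) ?_
    rintro y (rfl | rfl)
    · refine rle_left_cancel hxf ?_
      rw [mul_inv_cancel_left, ← hz₁]
      exact hl₁.1
    · refine rle_left_cancel hxe ?_
      rw [mul_inv_cancel_left]
      exact hl₂.1
  obtain ⟨z, hz⟩ : ∃ z, z = x * (f₁ * g) := ⟨_, rfl⟩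
  obtain ⟨hxz, hzγ⟩ := rle_mul_left hxγ hle
  have hfz := (rle_mul_left hxz (hl₃.2.1 f₁ (by simp))).2
  have hez := (rle_mul_left hxz (hl₃.2.1 e₂ (by simp))).2
  rw [mul_inv_cancel_left] at hzγ
  rw [← hz] at hzγ hfz hez
  rw [← hz₁] at hfz
  rw [hz₂] at hez
  have hue : rle cs u (u * e₁) := hl₁.2.1 u (by simp)
  have hwf : rle cs w (w * f₂) := by rw [← hz₂]; exact hl₂.2.1 w (by simp)
  have huz := rle_trans hue hfz
  have hwz := rle_trans hwf hez
  obtain ⟨p, hp⟩ := exists_join hγ hu hw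
  have hpz : rle cs p z := by
    refine hp.2.2 z hzγ ?_
    rintro y (rfl | rfl)
    · exact huz
    · exact hwz
  have hup : rle cs u p := hp.2.1 u (by simp)
  have hwp : rle cs w p := hp.2.1 w (by simp)
  have eg : g = (u * e₁)⁻¹ * z := by rw [hz₁, hz]; group
  have eh : h = (w * f₂)⁻¹ * z := by rw [← hz₂, hz, hgh]; group
  have he₁ : e₁ = u⁻¹ * (u * e₁) := by group
  have hf₂ : f₂ = w⁻¹ * (w * f₂) := by group
  refine ⟨u⁻¹ * p, w⁻¹ * p, div_rle hup hp.1, div_rle hwp hp.1, pgen cs γ (p⁻¹ * z) * C₃,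
    ?_, ?_, by group, by rwa [mul_inv_cancel_left]⟩
  · rw [← mul_assoc, ← mul_assoc, ← pgen_split hup hpz hzγ, pgen_split hue hfz hzγ, ← eg, ← he₁]
  · rw [← mul_assoc, ← mul_assoc, ← pgen_split hwp hpz hzγ, pgen_split hwf hez hzγ, ← eh, ← hf₂]

/-- Two words that are both empty, or whose first letters and tails satisfy `Completes`. -/
def WordsComplete (cs : CoxeterSystem M W) (γ : W) (X Y : FreeMonoid (NCGen cs γ)) : Prop :=
  (X = 1 ∧ Y = 1) ∨ ∃ (u w : NCGen cs γ) (A D : FreeMonoid (NCGen cs γ)),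
    X = FreeMonoid.of u * A ∧ Y = FreeMonoid.of w * D ∧
      Completes cs γ (u : W) (w : W) (PresentedMonoid.mk (posRels cs γ) A)
        (PresentedMonoid.mk (posRels cs γ) D)

theorem rlen_pos (g : NCGen cs γ) : 0 < rlen cs (g : W) :=
  Nat.pos_of_ne_zero fun h => g.2.1 (eq_one_of_rlen h)

/-- Equal words of weight at most `N` satisfy `WordsComplete`, given the theorem below weight
`N`; the induction runs over the generation of the congruence. -/
theorem wordsComplete [Fintype B] [Fintype W] (hγ : IsCoxeterElement cs γ) {N : ℕ}
    (hN : CompletesBelow cs γ N) {X Y : FreeMonoid (NCGen cs γ)}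
    (h : ConGen.Rel (posRels cs γ) X Y)
    (hX : (weight cs γ (PresentedMonoid.mk (posRels cs γ) X)).toAdd ≤ N) :
    WordsComplete cs γ X Y := by
  induction h with
  | of x y hxy =>
    obtain ⟨w₁, w₂, w₃, rfl, rfl, hw, hl⟩ := hxy
    have e : (w₁ : W)⁻¹ * w₃ = w₂ := by rw [← hw]; group
    refine Or.inr ⟨w₁, w₃, FreeMonoid.of w₂, 1, rfl, (mul_one _).symm, ?_⟩
    refine Completes.of_rle ?_ w₃.2.2 ?_
    · rw [rle, e, hl]
    · rw [e, pgen_coe, map_one, mul_one]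
  | refl X =>
    induction X using FreeMonoid.casesOn with
    | one => exact Or.inl ⟨rfl, rfl⟩
    | of_mul g A =>
      exact Or.inr ⟨g, g, A, A, rfl, rfl,
        Completes.of_rle (rle_refl _) g.2.2 (by simp [pgen_one])⟩
  | symm hr ih =>
    have hm := (PresentedMonoid.mk_eq_mk_iff (rels := posRels cs γ)).2 hr
    rcases ih (by rwa [hm]) with ⟨h1, h2⟩ | ⟨u, w, A, D, h1, h2, h3⟩
    · exact Or.inl ⟨h2, h1⟩
    · exact Or.inr ⟨w, u, D, A, h2, h1, h3.symm⟩
  | trans hr hr' ih ih' =>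
    have hm := (PresentedMonoid.mk_eq_mk_iff (rels := posRels cs γ)).2 hr
    rcases ih hX with ⟨h1, h2⟩ | ⟨u, x, A, D, h1, h2, h3⟩
    · rw [h1, ← h2]
      exact ih' (by rwa [← hm])
    rcases ih' (by rwa [← hm]) with ⟨k1, k2⟩ | ⟨x', w, D', E, k1, k2, k3⟩
    · rw [h2] at k1
      exact absurd k1 (List.cons_ne_nil x D)
    · obtain ⟨rfl, rfl⟩ := List.cons.inj (h2.symm.trans k1 : (x :: D : List _) = x' :: D')
      refine Or.inr ⟨u, w, A, E, h1, k2, h3.trans hγ hN u.2.2 x.2.2 w.2.2 k3 ?_⟩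
      rw [hm, h2, map_mul, map_mul, toAdd_mul, weight_of] at hX
      have := rlen_pos x
      omega
  | mul hr hr' ih ih' =>
    have hm := (PresentedMonoid.mk_eq_mk_iff (rels := posRels cs γ)).2 hr'
    rw [map_mul, map_mul, toAdd_mul] at hX
    rcases ih (by omega) with ⟨rfl, rfl⟩ | ⟨u, w, A, D, rfl, rfl, h3⟩
    · rw [one_mul, one_mul]
      exact ih' (by omega)
    · refine Or.inr ⟨u, w, A * _, D * _, mul_assoc _ _ _, mul_assoc _ _ _, ?_⟩
      rw [map_mul, map_mul, hm]
      exact h3.mul_right _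

theorem completesBelow [Fintype B] [Fintype W] (hγ : IsCoxeterElement cs γ) (N : ℕ) :
    CompletesBelow cs γ N := by
  induction N with
  | zero => exact fun _ _ _ _ _ _ _ h => absurd h (Nat.not_lt_zero _)
  | succ N ih =>
    intro u w A D hu hw h hlt
    by_cases hu1 : u = 1
    · subst hu1
      rw [pgen_one, one_mul] at h
      exact Completes.of_rle (one_rle w) hw (by simpa using h)
    by_cases hw1 : w = 1
    · subst hw1
      rw [pgen_one, one_mul] at h
      exact (Completes.of_rle (one_rle u) hu (by simpa using h.symm)).symm
    obtain ⟨A, rfl⟩ := PresentedMonoid.surjective_mk (rels := posRels cs γ) A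
    obtain ⟨D, rfl⟩ := PresentedMonoid.surjective_mk (rels := posRels cs γ) D
    rw [pgen_coe ⟨u, hu1, hu⟩, ← map_mul] at h hlt
    rw [pgen_coe ⟨w, hw1, hw⟩, ← map_mul] at h
    rcases wordsComplete hγ ih (PresentedMonoid.mk_eq_mk_iff.1 h) (Nat.lt_succ_iff.1 hlt) with
      ⟨h1, -⟩ | ⟨u', w', A', D', h1, h2, h3⟩
    · exact absurd h1 (List.cons_ne_nil _ A)
    · obtain ⟨rfl, rfl⟩ := List.cons.inj (h1 : (_ :: A : List _) = u' :: A')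
      obtain ⟨rfl, rfl⟩ := List.cons.inj (h2 : (_ :: D : List _) = w' :: D')
      exact h3

end Monoid

/-- Left prefix lemma in the positive monoid (Brady's Lemma on positive words):
if `⟨u⟩A = ⟨w⟩B` then `A = ⟨e⟩C`, `B = ⟨f⟩C` with `ue = wf = u ∨ w`. -/
theorem left_prefix_join [Fintype B] [Fintype W] (cs : CoxeterSystem M W) (γ : W)
    (hγ : IsCoxeterElement cs γ) (u w : W)
    (hu : u ≠ 1 ∧ rle cs u γ) (hw : w ≠ 1 ∧ rle cs w γ)
    (A C' : PosMonoid cs γ)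
    (hAB : PresentedMonoid.of (posRels cs γ) ⟨u, hu⟩ * A =
           PresentedMonoid.of (posRels cs γ) ⟨w, hw⟩ * C') :
    ∃ e f : W, rle cs e γ ∧ rle cs f γ ∧ ∃ C : PosMonoid cs γ,
      A = pgen cs γ e * C ∧ C' = pgen cs γ f * C ∧
      u * e = w * f ∧ IsIntervalLUB cs γ {u, w} (u * e) := by
  refine completesBelow hγ _ u w A C' hu.2 hw.2 ?_ (Nat.lt_succ_self _)
  rw [pgen_coe ⟨u, hu⟩, pgen_coe ⟨w, hw⟩]
  exact hAB
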